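/- Let A and B be differential graded Poisson algebras over a field k, and equip A⊗B with the tensor product differential graded Poisson algebra structure. Then (A⊗B)^e ≅ A^e ⊗ B^e as differential graded algebras; the isomorphism is realized by the DGA map m = m^A⊗m^B : A⊗B → A^e⊗B^e and the DG Lie algebra map h = m^A⊗h^B + h^A⊗m^B : A⊗B → A^e⊗B^e, which exhibit A^e⊗B^e as a universal enveloping algebra of A⊗B. -/

import Mathlib

open scoped TensorProduct

noncomputable section

namespace DGPaper

universe u

/-- A differential graded Lie algebra structure on a `k`-vector space `V`. -/
structure DGLAOn (k : Type u) [Field k] (V : Type u) [AddCommGroup V] [Module k V] where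
  gr : ℤ → Submodule k V
  decomp : DirectSum.Decomposition gr
  br : V →ₗ[k] V →ₗ[k] V
  br_mem : ∀ {i j : ℤ} {a b : V}, a ∈ gr i → b ∈ gr j → br a b ∈ gr (i + j)
  br_antisymm : ∀ {i j : ℤ} {a b : V}, a ∈ gr i → b ∈ gr j →
    br a b = -(((-1 : k) ^ (i * j)) • br b a)
  br_jacobi : ∀ {i j l : ℤ} {a b c : V}, a ∈ gr i → b ∈ gr j → c ∈ gr l →
    br a (br b c) = br (br a b) c + ((-1 : k) ^ (i * j)) • br b (br a c)
  d : V →ₗ[k] V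
  d_mem : ∀ {i : ℤ} {a : V}, a ∈ gr i → d a ∈ gr (i + 1)
  d_sq : ∀ a : V, d (d a) = 0
  d_br : ∀ {i j : ℤ} {a b : V}, a ∈ gr i → b ∈ gr j →
    d (br a b) = br (d a) b + ((-1 : k) ^ i) • br a (d b)

/-- A differential graded (associative, unital) algebra structure on a `k`-vector space `N`. -/
structure DGAOn (k : Type u) [Field k] (N : Type u) [AddCommGroup N] [Module k N] where
  gr : ℤ → Submodule k N
  decomp : DirectSum.Decomposition gr
  mul : N →ₗ[k] N →ₗ[k] N
  one : N
  one_mem : one ∈ gr 0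
  mul_mem : ∀ {i j : ℤ} {a b : N}, a ∈ gr i → b ∈ gr j → mul a b ∈ gr (i + j)
  mul_assoc : ∀ a b c : N, mul (mul a b) c = mul a (mul b c)
  one_mul : ∀ a : N, mul one a = a
  mul_one : ∀ a : N, mul a one = a
  d : N →ₗ[k] N
  d_mem : ∀ {i : ℤ} {a : N}, a ∈ gr i → d a ∈ gr (i + 1)
  d_sq : ∀ a : N, d (d a) = 0
  d_mul : ∀ {i j : ℤ} {a b : N}, a ∈ gr i → b ∈ gr j →
    d (mul a b) = mul (d a) b + ((-1 : k) ^ i) • mul a (d b)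

/-- A differential graded Poisson algebra structure on a `k`-vector space `M`. -/
structure DGPAOn (k : Type u) [Field k] (M : Type u) [AddCommGroup M] [Module k M] where
  gr : ℤ → Submodule k M
  decomp : DirectSum.Decomposition gr
  mul : M →ₗ[k] M →ₗ[k] M
  one : M
  one_mem : one ∈ gr 0
  mul_mem : ∀ {i j : ℤ} {a b : M}, a ∈ gr i → b ∈ gr j → mul a b ∈ gr (i + j)
  mul_assoc : ∀ a b c : M, mul (mul a b) c = mul a (mul b c)
  one_mul : ∀ a : M, mul one a = a
  mul_one : ∀ a : M, mul a one = a
  mul_comm : ∀ {i j : ℤ} {a b : M}, a ∈ gr i → b ∈ gr j →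
    mul a b = ((-1 : k) ^ (i * j)) • mul b a
  br : M →ₗ[k] M →ₗ[k] M
  br_mem : ∀ {i j : ℤ} {a b : M}, a ∈ gr i → b ∈ gr j → br a b ∈ gr (i + j)
  br_antisymm : ∀ {i j : ℤ} {a b : M}, a ∈ gr i → b ∈ gr j →
    br a b = -(((-1 : k) ^ (i * j)) • br b a)
  br_jacobi : ∀ {i j l : ℤ} {a b c : M}, a ∈ gr i → b ∈ gr j → c ∈ gr l →
    br a (br b c) = br (br a b) c + ((-1 : k) ^ (i * j)) • br b (br a c)
  br_deriv : ∀ {i j l : ℤ} {a b c : M}, a ∈ gr i → b ∈ gr j → c ∈ gr l →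
    br a (mul b c) = mul (br a b) c + ((-1 : k) ^ (i * j)) • mul b (br a c)
  d : M →ₗ[k] M
  d_mem : ∀ {i : ℤ} {a : M}, a ∈ gr i → d a ∈ gr (i + 1)
  d_sq : ∀ a : M, d (d a) = 0
  d_br : ∀ {i j : ℤ} {a b : M}, a ∈ gr i → b ∈ gr j →
    d (br a b) = br (d a) b + ((-1 : k) ^ i) • br a (d b)
  d_mul : ∀ {i j : ℤ} {a b : M}, a ∈ gr i → b ∈ gr j →
    d (mul a b) = mul (d a) b + ((-1 : k) ^ i) • mul a (d b)

section Defs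

variable {k : Type u} [Field k]

/-- The differential graded Lie algebra underlying a differential graded Poisson algebra. -/
def DGPAOn.toLie {M : Type u} [AddCommGroup M] [Module k M] (P : DGPAOn k M) :
    DGLAOn k M where
  gr := P.gr
  decomp := P.decomp
  br := P.br
  br_mem := P.br_mem
  br_antisymm := P.br_antisymm
  br_jacobi := P.br_jacobi
  d := P.d
  d_mem := P.d_mem
  d_sq := P.d_sq
  d_br := P.d_br

section Maps

variable {M N : Type u} [AddCommGroup M] [Module k M] [AddCommGroup N] [Module k N]

/-- A morphism of differential graded algebras (degree-0, multiplicative, unital,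
commuting with the differentials). -/
def IsDGAHom (E : DGAOn k M) (F : DGAOn k N) (f : M →ₗ[k] N) : Prop :=
  (∀ {n : ℤ} {x : M}, x ∈ E.gr n → f x ∈ F.gr n) ∧
  (∀ x y : M, f (E.mul x y) = F.mul (f x) (f y)) ∧
  f E.one = F.one ∧
  ∀ x : M, f (E.d x) = F.d (f x)

/-- A morphism of differential graded Poisson algebras. -/
def IsDGPAHom (P : DGPAOn k M) (Q : DGPAOn k N) (f : M →ₗ[k] N) : Prop :=
  (∀ {n : ℤ} {x : M}, x ∈ P.gr n → f x ∈ Q.gr n) ∧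
  (∀ x y : M, f (P.mul x y) = Q.mul (f x) (f y)) ∧
  f P.one = Q.one ∧
  (∀ x : M, f (P.d x) = Q.d (f x)) ∧
  ∀ x y : M, f (P.br x y) = Q.br (f x) (f y)

end Maps

section Tensor

variable {A B : Type u} [AddCommGroup A] [Module k A] [AddCommGroup B] [Module k B]

/-- `R` is the tensor product differential graded Poisson algebra structure on `A ⊗[k] B`
induced by `P` and `Q`. -/
def IsTensorDGPA (P : DGPAOn k A) (Q : DGPAOn k B) (R : DGPAOn k (A ⊗[k] B)) : Prop :=
  (∀ n : ℤ, R.gr n = Submodule.span k {z : A ⊗[k] B |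
      ∃ (i j : ℤ) (a : A) (b : B), i + j = n ∧ a ∈ P.gr i ∧ b ∈ Q.gr j ∧ z = a ⊗ₜ[k] b}) ∧
  R.one = P.one ⊗ₜ[k] Q.one ∧
  (∀ {i j i' j' : ℤ} {a a' : A} {b b' : B},
      a ∈ P.gr i → b ∈ Q.gr j → a' ∈ P.gr i' → b' ∈ Q.gr j' →
    R.mul (a ⊗ₜ[k] b) (a' ⊗ₜ[k] b') = ((-1 : k) ^ (i' * j)) • (P.mul a a' ⊗ₜ[k] Q.mul b b')) ∧
  (∀ {i j : ℤ} {a : A} {b : B}, a ∈ P.gr i → b ∈ Q.gr j →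
    R.d (a ⊗ₜ[k] b) = P.d a ⊗ₜ[k] b + ((-1 : k) ^ i) • (a ⊗ₜ[k] Q.d b)) ∧
  (∀ {i j i' j' : ℤ} {a a' : A} {b b' : B},
      a ∈ P.gr i → b ∈ Q.gr j → a' ∈ P.gr i' → b' ∈ Q.gr j' →
    R.br (a ⊗ₜ[k] b) (a' ⊗ₜ[k] b') =
      ((-1 : k) ^ (i' * j)) • (P.br a a' ⊗ₜ[k] Q.mul b b' + P.mul a a' ⊗ₜ[k] Q.br b b'))

/-- `G` is the tensor product differential graded algebra structure on `A ⊗[k] B`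
induced by `E` and `F` (with the Koszul sign rule). -/
def IsTensorDGA (E : DGAOn k A) (F : DGAOn k B) (G : DGAOn k (A ⊗[k] B)) : Prop :=
  (∀ n : ℤ, G.gr n = Submodule.span k {z : A ⊗[k] B |
      ∃ (i j : ℤ) (x : A) (y : B), i + j = n ∧ x ∈ E.gr i ∧ y ∈ F.gr j ∧ z = x ⊗ₜ[k] y}) ∧
  G.one = E.one ⊗ₜ[k] F.one ∧
  (∀ {i j i' j' : ℤ} {x x' : A} {y y' : B},
      x ∈ E.gr i → y ∈ F.gr j → x' ∈ E.gr i' → y' ∈ F.gr j' →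
    G.mul (x ⊗ₜ[k] y) (x' ⊗ₜ[k] y') = ((-1 : k) ^ (i' * j)) • (E.mul x x' ⊗ₜ[k] F.mul y y')) ∧
  (∀ {i j : ℤ} {x : A} {y : B}, x ∈ E.gr i → y ∈ F.gr j →
    G.d (x ⊗ₜ[k] y) = E.d x ⊗ₜ[k] y + ((-1 : k) ^ i) • (x ⊗ₜ[k] F.d y))

end Tensor

section Env

variable {M : Type u} [AddCommGroup M] [Module k M]

/-- The defining relations of the universal enveloping algebra `A^e` of a differential
graded Poisson algebra, imposed on the tensor algebra of `M × M`; the first copy of `M`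
gives the generators `m_a`, the second copy the generators `h_a`. -/
inductive EnvRel (P : DGPAOn k M) :
    TensorAlgebra k (M × M) → TensorAlgebra k (M × M) → Prop
  | relone : EnvRel P (TensorAlgebra.ι k ((P.one, 0) : M × M)) 1
  | relmul (a b : M) :
      EnvRel P (TensorAlgebra.ι k ((P.mul a b, 0) : M × M))
        (TensorAlgebra.ι k ((a, 0) : M × M) * TensorAlgebra.ι k ((b, 0) : M × M))
  | relhmul {i j : ℤ} {a b : M} (ha : a ∈ P.gr i) (hb : b ∈ P.gr j) :
      EnvRel P (TensorAlgebra.ι k ((0, P.mul a b) : M × M))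
        (TensorAlgebra.ι k ((a, 0) : M × M) * TensorAlgebra.ι k ((0, b) : M × M) +
          ((-1 : k) ^ (i * j)) •
            (TensorAlgebra.ι k ((b, 0) : M × M) * TensorAlgebra.ι k ((0, a) : M × M)))
  | relmbr {i j : ℤ} {a b : M} (ha : a ∈ P.gr i) (hb : b ∈ P.gr j) :
      EnvRel P (TensorAlgebra.ι k ((P.br a b, 0) : M × M))
        (TensorAlgebra.ι k ((0, a) : M × M) * TensorAlgebra.ι k ((b, 0) : M × M) -
          ((-1 : k) ^ (i * j)) •
            (TensorAlgebra.ι k ((b, 0) : M × M) * TensorAlgebra.ι k ((0, a) : M × M)))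
  | relhbr {i j : ℤ} {a b : M} (ha : a ∈ P.gr i) (hb : b ∈ P.gr j) :
      EnvRel P (TensorAlgebra.ι k ((0, P.br a b) : M × M))
        (TensorAlgebra.ι k ((0, a) : M × M) * TensorAlgebra.ι k ((0, b) : M × M) -
          ((-1 : k) ^ (i * j)) •
            (TensorAlgebra.ι k ((0, b) : M × M) * TensorAlgebra.ι k ((0, a) : M × M)))

/-- The universal enveloping algebra `A^e` of a differential graded Poisson algebra,
as a quotient of the tensor algebra on two copies of `A`. -/
abbrev Env (P : DGPAOn k M) : Type u := RingQuot (EnvRel P)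

/-- The generators `m_a` of `A^e`. -/
def mgen (P : DGPAOn k M) : M →ₗ[k] Env P :=
  (RingQuot.mkAlgHom k (EnvRel P)).toLinearMap ∘ₗ
    ((TensorAlgebra.ι k : (M × M) →ₗ[k] TensorAlgebra k (M × M)) ∘ₗ LinearMap.inl k M M)

/-- The generators `h_a` of `A^e`. -/
def hgen (P : DGPAOn k M) : M →ₗ[k] Env P :=
  (RingQuot.mkAlgHom k (EnvRel P)).toLinearMap ∘ₗ
    ((TensorAlgebra.ι k : (M × M) →ₗ[k] TensorAlgebra k (M × M)) ∘ₗ LinearMap.inr k M M)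

/-- `E` is the differential graded algebra structure on `A^e`, with the ring
multiplication of `A^e`, grading `|m_a| = |h_a| = |a|` and differential determined by
`∂(m_a) = m_{d a}`, `∂(h_a) = h_{d a}` and the graded Leibniz rule. -/
def IsEnvDGA (P : DGPAOn k M) (E : DGAOn k (Env P)) : Prop :=
  (∀ x y : Env P, E.mul x y = x * y) ∧
  E.one = 1 ∧
  (∀ {i : ℤ} {a : M}, a ∈ P.gr i → mgen P a ∈ E.gr i) ∧
  (∀ {i : ℤ} {a : M}, a ∈ P.gr i → hgen P a ∈ E.gr i) ∧
  (∀ a : M, E.d (mgen P a) = mgen P (P.d a)) ∧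
  (∀ a : M, E.d (hgen P a) = hgen P (P.d a))

end Env

section Lie

variable {V : Type u} [AddCommGroup V] [Module k V]

/-- The defining relations of the universal enveloping algebra of a differential graded
Lie algebra. -/
inductive LieRel (L : DGLAOn k V) : TensorAlgebra k V → TensorAlgebra k V → Prop
  | rel {i j : ℤ} {a b : V} (ha : a ∈ L.gr i) (hb : b ∈ L.gr j) :
      LieRel L
        (TensorAlgebra.ι k a * TensorAlgebra.ι k b -
          ((-1 : k) ^ (i * j)) • (TensorAlgebra.ι k b * TensorAlgebra.ι k a))
        (TensorAlgebra.ι k (L.br a b))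

/-- The universal enveloping algebra `U(L)` of a differential graded Lie algebra `L`. -/
abbrev ULie (L : DGLAOn k V) : Type u := RingQuot (LieRel L)

/-- The canonical map `L → U(L)`. -/
def uGen (L : DGLAOn k V) : V →ₗ[k] ULie L :=
  (RingQuot.mkAlgHom k (LieRel L)).toLinearMap ∘ₗ TensorAlgebra.ι k

/-- `E` is the differential graded algebra structure of `U(L)`. -/
def IsULieDGA (L : DGLAOn k V) (E : DGAOn k (ULie L)) : Prop :=
  (∀ x y : ULie L, E.mul x y = x * y) ∧
  E.one = 1 ∧
  (∀ {i : ℤ} {a : V}, a ∈ L.gr i → uGen L a ∈ E.gr i) ∧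
  (∀ a : V, E.d (uGen L a) = uGen L (L.d a))

/-- The graded-symmetry relations defining the graded symmetric algebra of `L`. -/
inductive SymRel (L : DGLAOn k V) : TensorAlgebra k V → TensorAlgebra k V → Prop
  | rel {i j : ℤ} {a b : V} (ha : a ∈ L.gr i) (hb : b ∈ L.gr j) :
      SymRel L (TensorAlgebra.ι k a * TensorAlgebra.ι k b)
        (((-1 : k) ^ (i * j)) • (TensorAlgebra.ι k b * TensorAlgebra.ι k a))

/-- The graded symmetric algebra `𝕊L` of a differential graded Lie algebra `L`. -/
abbrev SymAlg (L : DGLAOn k V) : Type u := RingQuot (SymRel L)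

/-- The canonical map `L → 𝕊L`. -/
def sGen (L : DGLAOn k V) : V →ₗ[k] SymAlg L :=
  (RingQuot.mkAlgHom k (SymRel L)).toLinearMap ∘ₗ TensorAlgebra.ι k

/-- `R` is the differential graded Poisson algebra structure on `𝕊L` with differential
extending `d` and bracket extending the Lie bracket of `L` as a graded biderivation. -/
def IsSymDGPA (L : DGLAOn k V) (R : DGPAOn k (SymAlg L)) : Prop :=
  (∀ x y : SymAlg L, R.mul x y = x * y) ∧
  R.one = 1 ∧
  (∀ {i : ℤ} {a : V}, a ∈ L.gr i → sGen L a ∈ R.gr i) ∧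
  (∀ a : V, R.d (sGen L a) = sGen L (L.d a)) ∧
  (∀ a b : V, R.br (sGen L a) (sGen L b) = sGen L (L.br a b))

/-- `S` is the graded semidirect product differential graded Lie algebra `L ⋊ L`. -/
def IsSemidirect (L : DGLAOn k V) (S : DGLAOn k (V × V)) : Prop :=
  (∀ n : ℤ, S.gr n = (L.gr n).prod (L.gr n)) ∧
  (∀ z : V × V, S.d z = (L.d z.1, L.d z.2)) ∧
  (∀ {i j : ℤ} {x₁ x₂ y₁ y₂ : V}, x₁ ∈ L.gr i → x₂ ∈ L.gr i → y₁ ∈ L.gr j → y₂ ∈ L.gr j →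
    S.br (x₁, x₂) (y₁, y₂) =
      (L.br x₂ y₁ - ((-1 : k) ^ (i * j)) • L.br y₂ x₁, L.br x₂ y₂))

end Lie

section Smash

variable {M : Type u} [AddCommGroup M] [Module k M]

/-- The generators `1#(ab) - a#b - (-1)^{|a||b|} b#a` of the ideal defining `A^E`
inside the smash product `A # U(A)`. -/
def smashGens (P : DGPAOn k M) : Set (M ⊗[k] ULie P.toLie) :=
  {z | ∃ (i j : ℤ) (a b : M), a ∈ P.gr i ∧ b ∈ P.gr j ∧
    z = P.one ⊗ₜ[k] uGen P.toLie (P.mul a b) - a ⊗ₜ[k] uGen P.toLie b -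
        ((-1 : k) ^ (i * j)) • (b ⊗ₜ[k] uGen P.toLie a)}

/-- The two-sided ideal generated by a set `T` in a differential graded algebra `S`. -/
def idealGen {N : Type u} [AddCommGroup N] [Module k N] (S : DGAOn k N) (T : Set N) :
    Submodule k N :=
  sInf {I : Submodule k N | T ⊆ I ∧ ∀ x ∈ I, ∀ y : N, S.mul x y ∈ I ∧ S.mul y x ∈ I}

/-- `S` is the smash product differential graded algebra `A # U(A)`. -/
def IsSmash (P : DGPAOn k M) (EU : DGAOn k (ULie P.toLie))
    (S : DGAOn k (M ⊗[k] ULie P.toLie)) : Prop :=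
  S.one = P.one ⊗ₜ[k] (1 : ULie P.toLie) ∧
  (∀ a b : M, S.mul (a ⊗ₜ[k] (1 : ULie P.toLie)) (b ⊗ₜ[k] (1 : ULie P.toLie)) =
      P.mul a b ⊗ₜ[k] (1 : ULie P.toLie)) ∧
  (∀ u v : ULie P.toLie, S.mul (P.one ⊗ₜ[k] u) (P.one ⊗ₜ[k] v) = P.one ⊗ₜ[k] (u * v)) ∧
  (∀ (a : M) (u : ULie P.toLie), S.mul (a ⊗ₜ[k] (1 : ULie P.toLie)) (P.one ⊗ₜ[k] u) =
      a ⊗ₜ[k] u) ∧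
  (∀ {i j : ℤ} {c b : M}, c ∈ P.gr i → b ∈ P.gr j →
    S.mul (P.one ⊗ₜ[k] uGen P.toLie c) (b ⊗ₜ[k] (1 : ULie P.toLie)) =
      P.br c b ⊗ₜ[k] (1 : ULie P.toLie) + ((-1 : k) ^ (i * j)) • (b ⊗ₜ[k] uGen P.toLie c)) ∧
  (∀ {i j : ℤ} {a : M} {u : ULie P.toLie}, a ∈ P.gr i → u ∈ EU.gr j →
      a ⊗ₜ[k] u ∈ S.gr (i + j)) ∧
  (∀ {i : ℤ} {a : M}, a ∈ P.gr i → ∀ u : ULie P.toLie,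
    S.d (a ⊗ₜ[k] u) = P.d a ⊗ₜ[k] u + ((-1 : k) ^ i) • (a ⊗ₜ[k] EU.d u))

/-- `R` is the quotient differential graded algebra structure of `S` by the ideal `I`. -/
def IsQuotDGA {N : Type u} [AddCommGroup N] [Module k N] (S : DGAOn k N)
    (I : Submodule k N) (R : DGAOn k (N ⧸ I)) : Prop :=
  (∀ n : ℤ, R.gr n = Submodule.map I.mkQ (S.gr n)) ∧
  R.one = I.mkQ S.one ∧
  (∀ x y : N, R.mul (I.mkQ x) (I.mkQ y) = I.mkQ (S.mul x y)) ∧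
  (∀ x : N, R.d (I.mkQ x) = I.mkQ (S.d x))

end Smash

section Op

variable {M N : Type u} [AddCommGroup M] [Module k M] [AddCommGroup N] [Module k N]

/-- `P'` is the opposite differential graded Poisson algebra of `P` (the product is
unchanged by graded commutativity, the bracket is negated). -/
def IsOpDGPA (P P' : DGPAOn k M) : Prop :=
  P'.gr = P.gr ∧ (∀ x y : M, P'.mul x y = P.mul x y) ∧ P'.one = P.one ∧ P'.d = P.d ∧
  (∀ x y : M, P'.br x y = - P.br x y)

/-- `E'` is the opposite differential graded algebra of `E` (with the Koszul sign). -/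
def IsOpDGA (E E' : DGAOn k N) : Prop :=
  E'.gr = E.gr ∧ E'.one = E.one ∧ E'.d = E.d ∧
  (∀ {i j : ℤ} {x y : N}, x ∈ E.gr i → y ∈ E.gr j →
    E'.mul x y = ((-1 : k) ^ (i * j)) • E.mul y x)

end Op

section UEnv

variable {M N : Type u} [AddCommGroup M] [Module k M] [AddCommGroup N] [Module k N]

/-- A pair `(f, g)` where `f : A → D` is a differential graded algebra map and
`g : A → D_L` is a differential graded Lie algebra map (into the graded commutator Lie
structure of `D`), satisfying the two compatibility conditions of the universal property
of the universal enveloping algebra of a differential graded Poisson algebra. -/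
def UEPair (P : DGPAOn k M) (D : DGAOn k N) (f g : M →ₗ[k] N) : Prop :=
  (∀ {n : ℤ} {x : M}, x ∈ P.gr n → f x ∈ D.gr n) ∧
  (∀ {n : ℤ} {x : M}, x ∈ P.gr n → g x ∈ D.gr n) ∧
  (∀ a b : M, f (P.mul a b) = D.mul (f a) (f b)) ∧
  f P.one = D.one ∧
  (∀ a : M, f (P.d a) = D.d (f a)) ∧
  (∀ a : M, g (P.d a) = D.d (g a)) ∧
  (∀ {i j : ℤ} {a b : M}, a ∈ P.gr i → b ∈ P.gr j →
    g (P.br a b) = D.mul (g a) (g b) - ((-1 : k) ^ (i * j)) • D.mul (g b) (g a)) ∧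
  (∀ {i j : ℤ} {a b : M}, a ∈ P.gr i → b ∈ P.gr j →
    f (P.br a b) = D.mul (g a) (f b) - ((-1 : k) ^ (i * j)) • D.mul (f b) (g a)) ∧
  (∀ {i j : ℤ} {a b : M}, a ∈ P.gr i → b ∈ P.gr j →
    g (P.mul a b) = D.mul (f a) (g b) + ((-1 : k) ^ (i * j)) • D.mul (f b) (g a))

/-- `(E, α, β)` is a universal enveloping algebra of the differential graded Poisson
algebra `P`. -/
def IsUEnv (P : DGPAOn k M) (E : DGAOn k N) (α β : M →ₗ[k] N) : Prop :=
  UEPair P E α β ∧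
  ∀ (D' : Type u) [AddCommGroup D'] [Module k D'] (D : DGAOn k D') (f g : M →ₗ[k] D'),
    UEPair P D f g →
    ∃! φ : N →ₗ[k] D',
      IsDGAHom E D φ ∧ (∀ a : M, φ (α a) = f a) ∧ (∀ a : M, φ (β a) = g a)

end UEnv

section IdealsQuotients

variable {M : Type u} [AddCommGroup M] [Module k M]

/-- `B` is a differential graded Poisson ideal of `P`. -/
def IsDGPIdeal (P : DGPAOn k M) (B : Submodule k M) : Prop :=
  (B = ⨆ n : ℤ, B ⊓ P.gr n) ∧
  (∀ x ∈ B, P.d x ∈ B) ∧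
  (∀ x ∈ B, ∀ a : M, P.mul x a ∈ B) ∧
  (∀ x ∈ B, ∀ a : M, P.mul a x ∈ B) ∧
  (∀ x ∈ B, ∀ a : M, P.br a x ∈ B)

/-- `B` is a differential graded Poisson subalgebra of `P`. -/
def IsDGPSubalg (P : DGPAOn k M) (B : Submodule k M) : Prop :=
  (B = ⨆ n : ℤ, B ⊓ P.gr n) ∧ P.one ∈ B ∧
  (∀ x ∈ B, ∀ y ∈ B, P.mul x y ∈ B) ∧
  (∀ x ∈ B, P.d x ∈ B) ∧
  (∀ x ∈ B, ∀ y ∈ B, P.br x y ∈ B)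

/-- `R` is the quotient differential graded Poisson algebra structure on `M ⧸ B`. -/
def IsQuotDGPA (P : DGPAOn k M) (B : Submodule k M) (R : DGPAOn k (M ⧸ B)) : Prop :=
  (∀ n : ℤ, R.gr n = Submodule.map B.mkQ (P.gr n)) ∧
  R.one = B.mkQ P.one ∧
  (∀ x y : M, R.mul (B.mkQ x) (B.mkQ y) = B.mkQ (P.mul x y)) ∧
  (∀ x : M, R.d (B.mkQ x) = B.mkQ (P.d x)) ∧
  (∀ x y : M, R.br (B.mkQ x) (B.mkQ y) = B.mkQ (P.br x y))

/-- `S` is the differential graded Poisson algebra structure induced on a differential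
graded Poisson subalgebra `B` of `P`. -/
def IsSubDGPA (P : DGPAOn k M) (B : Submodule k M) (S : DGPAOn k B) : Prop :=
  (∀ n : ℤ, S.gr n = Submodule.comap B.subtype (P.gr n)) ∧
  ((S.one : M) = P.one) ∧
  (∀ x y : B, (S.mul x y : M) = P.mul (x : M) (y : M)) ∧
  (∀ x : B, (S.d x : M) = P.d (x : M)) ∧
  (∀ x y : B, (S.br x y : M) = P.br (x : M) (y : M))

/-- The cocycles `ker d` of a differential graded Poisson algebra. -/
def Cocycles (P : DGPAOn k M) : Submodule k M := LinearMap.ker P.d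

/-- The coboundaries `im d`, viewed inside the cocycles. -/
def CobIn (P : DGPAOn k M) : Submodule k (Cocycles P) :=
  Submodule.comap (Cocycles P).subtype (LinearMap.range P.d)

/-- The cohomology `H(A) = ker d / im d` of a differential graded Poisson algebra. -/
abbrev Cohom (P : DGPAOn k M) : Type u := Cocycles P ⧸ CobIn P

/-- The class map `ker d → H(A)`. -/
def cohCls (P : DGPAOn k M) : Cocycles P →ₗ[k] Cohom P := (CobIn P).mkQ

/-- `R` is the graded Poisson algebra structure on the cohomology of `P` (a differential
graded Poisson algebra structure with zero differential, with the induced grading,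
product and bracket). -/
def IsCohomDGPA (P : DGPAOn k M) (R : DGPAOn k (Cohom P)) : Prop :=
  R.d = 0 ∧
  (∀ n : ℤ, R.gr n =
    Submodule.map (cohCls P) (Submodule.comap (Cocycles P).subtype (P.gr n))) ∧
  (∀ h : P.one ∈ Cocycles P, R.one = cohCls P ⟨P.one, h⟩) ∧
  (∀ (a b : Cocycles P) (h : P.mul (a : M) (b : M) ∈ Cocycles P),
    R.mul (cohCls P a) (cohCls P b) = cohCls P ⟨P.mul (a : M) (b : M), h⟩) ∧
  (∀ (a b : Cocycles P) (h : P.br (a : M) (b : M) ∈ Cocycles P),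
    R.br (cohCls P a) (cohCls P b) = cohCls P ⟨P.br (a : M) (b : M), h⟩)

end IdealsQuotients

end Defs

section ModuleDefs

variable {k : Type u} [Field k]

/-- A left differential graded module structure on `X` over the differential graded
algebra `E`. -/
structure DGModOn {N : Type u} [AddCommGroup N] [Module k N] (E : DGAOn k N)
    (X : Type u) [AddCommGroup X] [Module k X] where
  grm : ℤ → Submodule k X
  decomp : DirectSum.Decomposition grm
  act : N →ₗ[k] X →ₗ[k] X
  act_one : ∀ x : X, act E.one x = x
  act_mul : ∀ (r s : N) (x : X), act (E.mul r s) x = act r (act s x)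
  act_mem : ∀ {i j : ℤ} {r : N} {x : X}, r ∈ E.gr i → x ∈ grm j → act r x ∈ grm (i + j)
  dm : X →ₗ[k] X
  dm_mem : ∀ {i : ℤ} {x : X}, x ∈ grm i → dm x ∈ grm (i + 1)
  dm_sq : ∀ x : X, dm (dm x) = 0
  dm_act : ∀ {i : ℤ} {r : N}, r ∈ E.gr i → ∀ x : X,
    dm (act r x) = act (E.d r) x + ((-1 : k) ^ i) • act r (dm x)

/-- A left differential graded Poisson module structure on `X` over the differential
graded Poisson algebra `P`. -/
structure DGPModOn {M : Type u} [AddCommGroup M] [Module k M] (P : DGPAOn k M)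
    (X : Type u) [AddCommGroup X] [Module k X] where
  grm : ℤ → Submodule k X
  decomp : DirectSum.Decomposition grm
  act : M →ₗ[k] X →ₗ[k] X
  act_one : ∀ x : X, act P.one x = x
  act_mul : ∀ (a b : M) (x : X), act (P.mul a b) x = act a (act b x)
  act_mem : ∀ {i j : ℤ} {a : M} {x : X}, a ∈ P.gr i → x ∈ grm j → act a x ∈ grm (i + j)
  dm : X →ₗ[k] X
  dm_mem : ∀ {i : ℤ} {x : X}, x ∈ grm i → dm x ∈ grm (i + 1)
  dm_sq : ∀ x : X, dm (dm x) = 0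
  dm_act : ∀ {i : ℤ} {a : M}, a ∈ P.gr i → ∀ x : X,
    dm (act a x) = act (P.d a) x + ((-1 : k) ^ i) • act a (dm x)
  bact : M →ₗ[k] X →ₗ[k] X
  bact_mem : ∀ {i j : ℤ} {a : M} {x : X}, a ∈ P.gr i → x ∈ grm j → bact a x ∈ grm (i + j)
  bact_amod : ∀ {i j : ℤ} {a b : M}, a ∈ P.gr i → b ∈ P.gr j → ∀ x : X,
    bact a (act b x) = act (P.br a b) x + ((-1 : k) ^ (i * j)) • act b (bact a x)
  bact_mulact : ∀ {i j : ℤ} {a b : M}, a ∈ P.gr i → b ∈ P.gr j → ∀ x : X,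
    bact (P.mul a b) x = act a (bact b x) + ((-1 : k) ^ (i * j)) • act b (bact a x)
  bact_jacobi : ∀ {i j : ℤ} {a b : M}, a ∈ P.gr i → b ∈ P.gr j → ∀ x : X,
    bact a (bact b x) = bact (P.br a b) x + ((-1 : k) ^ (i * j)) • bact b (bact a x)
  dm_bact : ∀ {i : ℤ} {a : M}, a ∈ P.gr i → ∀ x : X,
    dm (bact a x) = bact (P.d a) x + ((-1 : k) ^ i) • bact a (dm x)

/-- A morphism of left differential graded modules. -/
def IsDGModHom {N X Y : Type u} [AddCommGroup N] [Module k N]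
    [AddCommGroup X] [Module k X] [AddCommGroup Y] [Module k Y]
    {E : DGAOn k N} (W : DGModOn E X) (W' : DGModOn E Y) (f : X →ₗ[k] Y) : Prop :=
  (∀ {n : ℤ} {x : X}, x ∈ W.grm n → f x ∈ W'.grm n) ∧
  (∀ x : X, f (W.dm x) = W'.dm (f x)) ∧
  (∀ (r : N) (x : X), f (W.act r x) = W'.act r (f x))

/-- A morphism of left differential graded Poisson modules. -/
def IsDGPModHom {M X Y : Type u} [AddCommGroup M] [Module k M]
    [AddCommGroup X] [Module k X] [AddCommGroup Y] [Module k Y]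
    {P : DGPAOn k M} (V : DGPModOn P X) (V' : DGPModOn P Y) (f : X →ₗ[k] Y) : Prop :=
  (∀ {n : ℤ} {x : X}, x ∈ V.grm n → f x ∈ V'.grm n) ∧
  (∀ x : X, f (V.dm x) = V'.dm (f x)) ∧
  (∀ (a : M) (x : X), f (V.act a x) = V'.act a (f x)) ∧
  (∀ (a : M) (x : X), f (V.bact a x) = V'.bact a (f x))

/-- The correspondence between a differential graded Poisson module structure over `P`
and a differential graded module structure over `A^e` on the same space. -/
def ModCorr {M X : Type u} [AddCommGroup M] [Module k M] [AddCommGroup X] [Module k X]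
    {P : DGPAOn k M} {E : DGAOn k (Env P)}
    (V : DGPModOn P X) (W : DGModOn E X) : Prop :=
  W.grm = V.grm ∧ W.dm = V.dm ∧
  (∀ (a : M) (x : X), W.act (mgen P a) x = V.act a x) ∧
  (∀ (a : M) (x : X), W.act (hgen P a) x = V.bact a x)

end ModuleDefs

/-!
A pair of maps on `A ⊗ B` satisfying the relations of `(m, h)` restricts to such pairs on `A ⊗ 1`
and `1 ⊗ B`, hence lifts to morphisms from `A^e` and from `B^e`. Since `{a ⊗ 1, 1 ⊗ b} = 0`, these
relations make the images of the generators graded-commute. The graded centralizer of a set of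
homogeneous elements stable under `d` is a differential graded subalgebra, so by universality the
full images of `A^e` and `B^e` graded-commute, and the two morphisms multiply to one on
`A^e ⊗ B^e`. It is unique because `A^e ⊗ 1` and `1 ⊗ B^e` generate. That `(m ⊗ m, m ⊗ h + h ⊗ m)`
is itself a pair satisfying the relations is a computation with Koszul signs.
-/

section Signs

variable {k : Type*} [Field k]

lemma neg_one_zpow_mul_self (n : ℤ) : (-1 : k) ^ n * (-1 : k) ^ n = 1 := by
  rw [← mul_zpow, neg_mul_neg, one_mul, one_zpow]

lemma neg_one_zpow_add (i j : ℤ) : (-1 : k) ^ (i + j) = (-1 : k) ^ i * (-1 : k) ^ j :=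
  zpow_add₀ (neg_ne_zero.mpr one_ne_zero) i j

lemma neg_one_zpow_add_mul_add (i j i' j' : ℤ) :
    (-1 : k) ^ ((i + j) * (i' + j')) =
      (-1 : k) ^ (i * i') * (-1 : k) ^ (i * j') * (-1 : k) ^ (i' * j) * (-1 : k) ^ (j * j') := by
  rw [show (i + j) * (i' + j') = i * i' + i * j' + i' * j + j * j' by ring]
  simp only [neg_one_zpow_add]

end Signs

section GradedModules

variable {k : Type*} [CommRing k] {ι : Type*} [DecidableEq ι]
variable {M N L : Type*} [AddCommGroup M] [Module k M] [AddCommGroup N] [Module k N]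
  [AddCommGroup L] [Module k L]
variable {gr : ι → Submodule k M} {gr' : ι → Submodule k N}

lemma linearMap_ext_of_decomposition (_ : DirectSum.Decomposition gr) {φ ψ : M →ₗ[k] L}
    (h : ∀ {i x}, x ∈ gr i → φ x = ψ x) : φ = ψ :=
  DirectSum.decompose_lhom_ext gr fun _ ↦ LinearMap.ext fun x ↦ h x.2

lemma bilinearMap_ext_of_decomposition (dec : DirectSum.Decomposition gr)
    (dec' : DirectSum.Decomposition gr') {φ ψ : M →ₗ[k] N →ₗ[k] L}
    (h : ∀ {i j x y}, x ∈ gr i → y ∈ gr' j → φ x y = ψ x y) : φ = ψ :=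
  linearMap_ext_of_decomposition dec fun hx ↦ linearMap_ext_of_decomposition dec' fun hy ↦ h hx hy

lemma tensorProduct_ext_of_decomposition (dec : DirectSum.Decomposition gr)
    (dec' : DirectSum.Decomposition gr') {φ ψ : M ⊗[k] N →ₗ[k] L}
    (h : ∀ {i j x y}, x ∈ gr i → y ∈ gr' j → φ (x ⊗ₜ[k] y) = ψ (x ⊗ₜ[k] y)) : φ = ψ :=
  TensorProduct.ext (bilinearMap_ext_of_decomposition dec dec' h)

lemma tensorProduct_ext₂_of_decomposition (dec : DirectSum.Decomposition gr)
    (dec' : DirectSum.Decomposition gr') {φ ψ : M ⊗[k] N →ₗ[k] M ⊗[k] N →ₗ[k] L}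
    (h : ∀ {i j i' j' x y x' y'}, x ∈ gr i → y ∈ gr' j → x' ∈ gr i' → y' ∈ gr' j' →
      φ (x ⊗ₜ[k] y) (x' ⊗ₜ[k] y') = ψ (x ⊗ₜ[k] y) (x' ⊗ₜ[k] y')) : φ = ψ :=
  tensorProduct_ext_of_decomposition dec dec' fun hx hy ↦
    tensorProduct_ext_of_decomposition dec dec' fun hx' hy' ↦ h hx hy hx' hy'

lemma iSupIndep_gr (_ : DirectSum.Decomposition gr) : iSupIndep gr :=
  (DirectSum.Decomposition.isInternal gr).submodule_iSupIndep

lemma eq_gr_of_le_of_iSup_eq_top (dec : DirectSum.Decomposition gr) {H : ι → Submodule k M}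
    (hle : ∀ n, H n ≤ gr n) (htop : ⨆ n, H n = ⊤) : H = gr :=
  ((iSupIndep_gr dec).le_iff_eq_of_iSup_eq_top htop).mp hle

lemma apply_mem_iSup (_ : DirectSum.Decomposition gr) {φ : M →ₗ[k] N} {H : ι → Submodule k N}
    (h : ∀ {n x}, x ∈ gr n → φ x ∈ H n) (x : M) : φ x ∈ ⨆ n, H n := by
  have hle : ⨆ n, gr n ≤ (⨆ n, H n).comap φ :=
    iSup_le fun n x hx ↦ Submodule.mem_iSup_of_mem n (h hx)
  exact hle ((DirectSum.Decomposition.isInternal gr).submodule_iSup_eq_top ▸ Submodule.mem_top)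

lemma isInternal_comap_subtype_iSup {H : ι → Submodule k M} (hH : iSupIndep H) :
    DirectSum.IsInternal fun n ↦ (H n).comap (⨆ n, H n).subtype := by
  have hmap : ∀ n, ((H n).comap (⨆ n, H n).subtype).map (⨆ n, H n).subtype = H n := fun n ↦ by
    rw [Submodule.map_comap_subtype, inf_eq_right.mpr (le_iSup H n)]
  refine DirectSum.isInternal_submodule_of_iSupIndep_of_iSup_eq_top ?_ ?_
  · rw [← iSupIndep_map_orderIso_iff (⨆ n, H n).mapIic]
    exact .of_coe_Iic_comp ((congrArg iSupIndep (funext hmap)).mpr hH)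
  · refine Submodule.map_injective_of_injective (⨆ n, H n).injective_subtype ?_
    simp only [Submodule.map_iSup, hmap, Submodule.map_subtype_top]

end GradedModules

section TotalGrading

variable {k : Type*} [CommRing k] {ι : Type*} [Add ι]
variable {M N L : Type*} [AddCommGroup M] [Module k M] [AddCommGroup N] [Module k N]
  [AddCommGroup L] [Module k L]
variable {gr : ι → Submodule k M} {gr' : ι → Submodule k N}

/-- The total grading on `M ⊗ N`, whose degree-`n` part is spanned by the products `x ⊗ y` of
homogeneous elements with `|x| + |y| = n`. -/
def tensorGr (gr : ι → Submodule k M) (gr' : ι → Submodule k N) (n : ι) :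
    Submodule k (M ⊗[k] N) :=
  Submodule.span k {z | ∃ (i j : ι) (x : M) (y : N),
    i + j = n ∧ x ∈ gr i ∧ y ∈ gr' j ∧ z = x ⊗ₜ[k] y}

lemma tmul_mem_tensorGr {i j : ι} {x : M} {y : N} (hx : x ∈ gr i) (hy : y ∈ gr' j) :
    x ⊗ₜ[k] y ∈ tensorGr gr gr' (i + j) :=
  Submodule.subset_span ⟨i, j, x, y, rfl, hx, hy, rfl⟩

lemma apply_mem_of_mem_tensorGr {n : ι} {φ : M ⊗[k] N →ₗ[k] L} {S : Submodule k L}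
    (h : ∀ {i j x y}, i + j = n → x ∈ gr i → y ∈ gr' j → φ (x ⊗ₜ[k] y) ∈ S)
    {z : M ⊗[k] N} (hz : z ∈ tensorGr gr gr' n) : φ z ∈ S := by
  refine (Submodule.span_le (p := S.comap φ)).mpr ?_ hz
  rintro _ ⟨i, j, x, y, hij, hx, hy, rfl⟩
  exact h hij hx hy

lemma bilinearMap_eq_of_mem_tensorGr {n n' : ι}
    {φ ψ : M ⊗[k] N →ₗ[k] M ⊗[k] N →ₗ[k] L}
    (h : ∀ {i j i' j' x y x' y'}, i + j = n → i' + j' = n' →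
      x ∈ gr i → y ∈ gr' j → x' ∈ gr i' → y' ∈ gr' j' →
      φ (x ⊗ₜ[k] y) (x' ⊗ₜ[k] y') = ψ (x ⊗ₜ[k] y) (x' ⊗ₜ[k] y'))
    {z z' : M ⊗[k] N} (hz : z ∈ tensorGr gr gr' n) (hz' : z' ∈ tensorGr gr gr' n') :
    φ z z' = ψ z z' := by
  refine LinearMap.eqOn_span (f := φ.flip z') (g := ψ.flip z') ?_ hz
  rintro _ ⟨i, j, x, y, hij, hx, hy, rfl⟩
  refine LinearMap.eqOn_span (f := φ (x ⊗ₜ y)) (g := ψ (x ⊗ₜ y)) ?_ hz'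
  rintro _ ⟨i', j', x', y', hij', hx', hy', rfl⟩
  exact h hij hij' hx hy hx' hy'

end TotalGrading

section Structures

variable {k : Type u} [Field k]
variable {M N L : Type u} [AddCommGroup M] [Module k M] [AddCommGroup N] [Module k N]
  [AddCommGroup L] [Module k L]

lemma DGAOn.d_one (E : DGAOn k M) : E.d E.one = 0 := by
  simpa [E.one_mul, E.mul_one] using E.d_mul E.one_mem E.one_mem

lemma DGPAOn.d_one (P : DGPAOn k M) : P.d P.one = 0 := by
  simpa [P.one_mul, P.mul_one] using P.d_mul P.one_mem P.one_mem

lemma DGPAOn.br_one (P : DGPAOn k M) (a : M) : P.br a P.one = 0 := by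
  have : P.br.flip P.one = 0 := linearMap_ext_of_decomposition P.decomp fun ha ↦ by
    simpa [P.one_mul, P.mul_one] using P.br_deriv ha P.one_mem P.one_mem
  exact LinearMap.congr_fun this a

lemma DGPAOn.one_br (P : DGPAOn k M) (a : M) : P.br P.one a = 0 := by
  have : P.br P.one = 0 := linearMap_ext_of_decomposition P.decomp fun ha ↦ by
    simp [P.br_antisymm P.one_mem ha, P.br_one]
  exact LinearMap.congr_fun this a

namespace IsDGAHom

variable {E : DGAOn k M} {F : DGAOn k N} {D : DGAOn k L} {φ : M →ₗ[k] N} {ψ : N →ₗ[k] L}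

lemma map_mem (h : IsDGAHom E F φ) {n : ℤ} {x : M} (hx : x ∈ E.gr n) : φ x ∈ F.gr n := h.1 hx

lemma map_mul (h : IsDGAHom E F φ) (x y : M) : φ (E.mul x y) = F.mul (φ x) (φ y) := h.2.1 x y

lemma map_one (h : IsDGAHom E F φ) : φ E.one = F.one := h.2.2.1

lemma map_d (h : IsDGAHom E F φ) (x : M) : φ (E.d x) = F.d (φ x) := h.2.2.2 x

protected lemma id (E : DGAOn k M) : IsDGAHom E E LinearMap.id :=
  ⟨fun hx ↦ hx, fun _ _ ↦ rfl, rfl, fun _ ↦ rfl⟩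

lemma comp (hψ : IsDGAHom F D ψ) (hφ : IsDGAHom E F φ) : IsDGAHom E D (ψ ∘ₗ φ) :=
  ⟨fun hx ↦ hψ.map_mem (hφ.map_mem hx), fun x y ↦ by simp [hφ.map_mul, hψ.map_mul],
    by simp [hφ.map_one, hψ.map_one], fun x ↦ by simp [hφ.map_d, hψ.map_d]⟩

end IsDGAHom

namespace IsDGPAHom

variable {P : DGPAOn k M} {Q : DGPAOn k N} {φ : M →ₗ[k] N}

lemma map_mem (h : IsDGPAHom P Q φ) {n : ℤ} {x : M} (hx : x ∈ P.gr n) : φ x ∈ Q.gr n := h.1 hx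

lemma map_mul (h : IsDGPAHom P Q φ) (x y : M) : φ (P.mul x y) = Q.mul (φ x) (φ y) := h.2.1 x y

lemma map_one (h : IsDGPAHom P Q φ) : φ P.one = Q.one := h.2.2.1

lemma map_d (h : IsDGPAHom P Q φ) (x : M) : φ (P.d x) = Q.d (φ x) := h.2.2.2.1 x

lemma map_br (h : IsDGPAHom P Q φ) (x y : M) : φ (P.br x y) = Q.br (φ x) (φ y) := h.2.2.2.2 x y

end IsDGPAHom

namespace UEPair

variable {P : DGPAOn k M} {D : DGAOn k N} {f g : M →ₗ[k] N} {i j : ℤ} {a b : M}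

lemma fst_mem (h : UEPair P D f g) (ha : a ∈ P.gr i) : f a ∈ D.gr i := h.1 ha

lemma snd_mem (h : UEPair P D f g) (ha : a ∈ P.gr i) : g a ∈ D.gr i := h.2.1 ha

lemma fst_mul (h : UEPair P D f g) (a b : M) : f (P.mul a b) = D.mul (f a) (f b) :=
  h.2.2.1 a b

lemma fst_one (h : UEPair P D f g) : f P.one = D.one := h.2.2.2.1

lemma fst_d (h : UEPair P D f g) (a : M) : f (P.d a) = D.d (f a) := h.2.2.2.2.1 a

lemma snd_d (h : UEPair P D f g) (a : M) : g (P.d a) = D.d (g a) := h.2.2.2.2.2.1 a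

lemma snd_br (h : UEPair P D f g) (ha : a ∈ P.gr i) (hb : b ∈ P.gr j) :
    g (P.br a b) = D.mul (g a) (g b) - ((-1 : k) ^ (i * j)) • D.mul (g b) (g a) :=
  h.2.2.2.2.2.2.1 ha hb

lemma fst_br (h : UEPair P D f g) (ha : a ∈ P.gr i) (hb : b ∈ P.gr j) :
    f (P.br a b) = D.mul (g a) (f b) - ((-1 : k) ^ (i * j)) • D.mul (f b) (g a) :=
  h.2.2.2.2.2.2.2.1 ha hb

lemma snd_mul (h : UEPair P D f g) (ha : a ∈ P.gr i) (hb : b ∈ P.gr j) :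
    g (P.mul a b) = D.mul (f a) (g b) + ((-1 : k) ^ (i * j)) • D.mul (f b) (g a) :=
  h.2.2.2.2.2.2.2.2 ha hb

lemma snd_one (h : UEPair P D f g) : g P.one = 0 := by
  simpa [P.one_mul, h.fst_one, D.one_mul] using h.snd_mul P.one_mem P.one_mem

lemma mul_fst_fst_swap (h : UEPair P D f g) (ha : a ∈ P.gr i) (hb : b ∈ P.gr j) :
    D.mul (f a) (f b) = ((-1 : k) ^ (i * j)) • D.mul (f b) (f a) := by
  rw [← h.fst_mul, ← h.fst_mul, P.mul_comm ha hb, map_smul]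

lemma comp_dgpaHom {O : Type u} [AddCommGroup O] [Module k O] {S : DGPAOn k O} {φ : O →ₗ[k] M}
    (h : UEPair P D f g) (hφ : IsDGPAHom S P φ) : UEPair S D (f ∘ₗ φ) (g ∘ₗ φ) :=
  ⟨fun hx ↦ h.fst_mem (hφ.map_mem hx), fun hx ↦ h.snd_mem (hφ.map_mem hx),
    fun a b ↦ by simp [hφ.map_mul, h.fst_mul], by simp [hφ.map_one, h.fst_one],
    fun a ↦ by simp [hφ.map_d, h.fst_d], fun a ↦ by simp [hφ.map_d, h.snd_d],
    fun ha hb ↦ by simp [hφ.map_br, h.snd_br (hφ.map_mem ha) (hφ.map_mem hb)],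
    fun ha hb ↦ by simp [hφ.map_br, h.fst_br (hφ.map_mem ha) (hφ.map_mem hb)],
    fun ha hb ↦ by simp [hφ.map_mul, h.snd_mul (hφ.map_mem ha) (hφ.map_mem hb)]⟩

lemma dgaHom_comp {D' : DGAOn k L} {φ : N →ₗ[k] L} (h : UEPair P D f g)
    (hφ : IsDGAHom D D' φ) : UEPair P D' (φ ∘ₗ f) (φ ∘ₗ g) :=
  ⟨fun hx ↦ hφ.map_mem (h.fst_mem hx), fun hx ↦ hφ.map_mem (h.snd_mem hx),
    fun a b ↦ by simp [hφ.map_mul, h.fst_mul], by simp [hφ.map_one, h.fst_one],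
    fun a ↦ by simp [hφ.map_d, h.fst_d], fun a ↦ by simp [hφ.map_d, h.snd_d],
    fun ha hb ↦ by simp [hφ.map_mul, h.snd_br ha hb],
    fun ha hb ↦ by simp [hφ.map_mul, h.fst_br ha hb],
    fun ha hb ↦ by simp [hφ.map_mul, h.snd_mul ha hb]⟩

end UEPair

namespace IsUEnv

variable {N' : Type u} [AddCommGroup N'] [Module k N']
variable {P : DGPAOn k M} {E : DGAOn k N} {α β : M →ₗ[k] N}

lemma uePair (h : IsUEnv P E α β) : UEPair P E α β := h.1

lemma exists_lift (h : IsUEnv P E α β) {D : DGAOn k L} {f g : M →ₗ[k] L} (hfg : UEPair P D f g) :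
    ∃ φ : N →ₗ[k] L, IsDGAHom E D φ ∧ (∀ a, φ (α a) = f a) ∧ ∀ a, φ (β a) = g a :=
  (h.2 L D f g hfg).exists

lemma hom_ext (h : IsUEnv P E α β) {D : DGAOn k L} {φ ψ : N →ₗ[k] L} (hφ : IsDGAHom E D φ)
    (hψ : IsDGAHom E D ψ) (hα : ∀ a, φ (α a) = ψ (α a)) (hβ : ∀ a, φ (β a) = ψ (β a)) : φ = ψ :=
  (h.2 L D (ψ ∘ₗ α) (ψ ∘ₗ β) (h.uePair.dgaHom_comp hψ)).unique
    ⟨hφ, hα, hβ⟩ ⟨hψ, fun _ ↦ rfl, fun _ ↦ rfl⟩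

lemma exists_bijective {E' : DGAOn k N'} {α' β' : M →ₗ[k] N'} (h : IsUEnv P E α β)
    (h' : IsUEnv P E' α' β') :
    ∃ φ : N →ₗ[k] N', IsDGAHom E E' φ ∧ Function.Bijective φ ∧
      (∀ a, φ (α a) = α' a) ∧ ∀ a, φ (β a) = β' a := by
  obtain ⟨φ, hφ, hφα, hφβ⟩ := h.exists_lift h'.uePair
  obtain ⟨ψ, hψ, hψα, hψβ⟩ := h'.exists_lift h.uePair
  have left_inv : ψ ∘ₗ φ = LinearMap.id :=
    h.hom_ext (hψ.comp hφ) (.id E) (by simp [hφα, hψα]) (by simp [hφβ, hψβ])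
  have right_inv : φ ∘ₗ ψ = LinearMap.id :=
    h'.hom_ext (hφ.comp hψ) (.id E') (by simp [hφα, hψα]) (by simp [hφβ, hψβ])
  exact ⟨φ, hφ, Function.bijective_iff_has_inverse.mpr
    ⟨ψ, LinearMap.congr_fun left_inv, LinearMap.congr_fun right_inv⟩, hφα, hφβ⟩

end IsUEnv

end Structures

section Subalgebras

variable {k : Type u} [Field k] {N : Type u} [AddCommGroup N] [Module k N]

/-- A graded subalgebra of `D`, given by its homogeneous components `H n ≤ D.gr n`. -/
structure IsGradedSubalgebra (D : DGAOn k N) (H : ℤ → Submodule k N) : Prop where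
  le_gr : ∀ n, H n ≤ D.gr n
  one_mem : D.one ∈ H 0
  mul_mem : ∀ {i j x y}, x ∈ H i → y ∈ H j → D.mul x y ∈ H (i + j)

/-- A differential graded subalgebra of `D`, given by its homogeneous components. -/
structure IsDGSubalgebra (D : DGAOn k N) (H : ℤ → Submodule k N) : Prop
    extends IsGradedSubalgebra D H where
  d_mem : ∀ {i x}, x ∈ H i → D.d x ∈ H (i + 1)

variable {D : DGAOn k N} {H : ℤ → Submodule k N}

lemma IsGradedSubalgebra.mul_mem_iSup (hH : IsGradedSubalgebra D H) {x y : N}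
    (hx : x ∈ ⨆ n, H n) (hy : y ∈ ⨆ n, H n) : D.mul x y ∈ ⨆ n, H n := by
  have hle : Submodule.map₂ D.mul (⨆ n, H n) (⨆ n, H n) ≤ ⨆ n, H n := by
    simp only [Submodule.map₂_iSup_left, Submodule.map₂_iSup_right, iSup_le_iff, Submodule.map₂_le]
    exact fun i j x hx y hy ↦ Submodule.mem_iSup_of_mem _ (hH.mul_mem hx hy)
  exact hle (Submodule.apply_mem_map₂ _ hx hy)

namespace IsDGSubalgebra

lemma d_mem_iSup (hH : IsDGSubalgebra D H) {x : N} (hx : x ∈ ⨆ n, H n) : D.d x ∈ ⨆ n, H n :=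
  (iSup_le fun i _ hx ↦ Submodule.mem_iSup_of_mem (i + 1) (hH.d_mem hx) :
    ⨆ n, H n ≤ (⨆ n, H n).comap D.d) hx

/-- The differential graded algebra structure on (the sum of the components of) a differential
graded subalgebra. -/
def toDGAOn (hH : IsDGSubalgebra D H) : DGAOn k ↥(⨆ n, H n) where
  gr n := (H n).comap (⨆ n, H n).subtype
  decomp := (isInternal_comap_subtype_iSup
    ((iSupIndep_gr D.decomp).mono hH.le_gr)).chooseDecomposition
  mul := LinearMap.mk₂ k (fun x y ↦ ⟨D.mul x y, hH.mul_mem_iSup x.2 y.2⟩)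
    (fun _ _ _ ↦ Subtype.ext (by simp)) (fun _ _ _ ↦ Subtype.ext (by simp))
    (fun _ _ _ ↦ Subtype.ext (by simp)) (fun _ _ _ ↦ Subtype.ext (by simp))
  one := ⟨D.one, Submodule.mem_iSup_of_mem 0 hH.one_mem⟩
  one_mem := hH.one_mem
  mul_mem := hH.mul_mem
  mul_assoc _ _ _ := Subtype.ext (D.mul_assoc _ _ _)
  one_mul _ := Subtype.ext (D.one_mul _)
  mul_one _ := Subtype.ext (D.mul_one _)
  d := D.d.restrict fun _ ↦ hH.d_mem_iSup
  d_mem := hH.d_mem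
  d_sq _ := Subtype.ext (D.d_sq _)
  d_mul hx hy := Subtype.ext (D.d_mul (hH.le_gr _ hx) (hH.le_gr _ hy))

lemma isDGAHom_subtype (hH : IsDGSubalgebra D H) :
    IsDGAHom hH.toDGAOn D (⨆ n, H n).subtype :=
  ⟨fun hx ↦ hH.le_gr _ hx, fun _ _ ↦ rfl, rfl, fun _ ↦ rfl⟩

end IsDGSubalgebra

variable {M L : Type u} [AddCommGroup M] [Module k M] [AddCommGroup L] [Module k L]

lemma UEPair.of_injective {P : DGPAOn k M} {E : DGAOn k L} {ι : L →ₗ[k] N} {f g : M →ₗ[k] L}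
    (h : UEPair P D (ι ∘ₗ f) (ι ∘ₗ g)) (hι : IsDGAHom E D ι) (hinj : Function.Injective ι)
    (hf : ∀ {n a}, a ∈ P.gr n → f a ∈ E.gr n) (hg : ∀ {n a}, a ∈ P.gr n → g a ∈ E.gr n) :
    UEPair P E f g :=
  ⟨hf, hg,
    fun a b ↦ hinj (by simpa [hι.map_mul] using h.fst_mul a b),
    hinj (by simpa [hι.map_one] using h.fst_one),
    fun a ↦ hinj (by simpa [hι.map_d] using h.fst_d a),
    fun a ↦ hinj (by simpa [hι.map_d] using h.snd_d a),
    fun ha hb ↦ hinj (by simpa [hι.map_mul] using h.snd_br ha hb),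
    fun ha hb ↦ hinj (by simpa [hι.map_mul] using h.fst_br ha hb),
    fun ha hb ↦ hinj (by simpa [hι.map_mul] using h.snd_mul ha hb)⟩

-- Lifting into the subalgebra and comparing with `φ` by uniqueness replaces an induction on
-- generators, which is not available for an abstract universal pair.
lemma IsUEnv.map_mem_of_isDGSubalgebra {P : DGPAOn k M} {E : DGAOn k L} {α β : M →ₗ[k] L}
    (h : IsUEnv P E α β) {φ : L →ₗ[k] N} (hφ : IsDGAHom E D φ) (hH : IsDGSubalgebra D H)
    (hα : ∀ {n a}, a ∈ P.gr n → φ (α a) ∈ H n) (hβ : ∀ {n a}, a ∈ P.gr n → φ (β a) ∈ H n)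
    {n : ℤ} {x : L} (hx : x ∈ E.gr n) : φ x ∈ H n := by
  let f := (φ ∘ₗ α).codRestrict (⨆ n, H n) (apply_mem_iSup P.decomp hα)
  let g := (φ ∘ₗ β).codRestrict (⨆ n, H n) (apply_mem_iSup P.decomp hβ)
  have hfg : UEPair P hH.toDGAOn f g :=
    UEPair.of_injective (h.uePair.dgaHom_comp hφ) hH.isDGAHom_subtype
      (Submodule.injective_subtype _) hα hβ
  obtain ⟨ψ, hψ, hψα, hψβ⟩ := h.exists_lift hfg
  have hfactor : (⨆ n, H n).subtype ∘ₗ ψ = φ :=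
    h.hom_ext (hH.isDGAHom_subtype.comp hψ) hφ (fun a ↦ congrArg Subtype.val (hψα a))
      fun a ↦ congrArg Subtype.val (hψβ a)
  rw [← hfactor]
  exact hψ.map_mem hx

end Subalgebras

section GradedCommutation

variable {k : Type u} [Field k] {N : Type u} [AddCommGroup N] [Module k N]

/-- `x` and `y` commute up to the Koszul sign of the degrees `i` of `x` and `j` of `y`. -/
def GradedCommute (D : DGAOn k N) (i j : ℤ) (x y : N) : Prop :=
  D.mul x y = ((-1 : k) ^ (i * j)) • D.mul y x

namespace GradedCommute

variable {D : DGAOn k N} {i i' j : ℤ} {x x' y : N}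

lemma symm (h : GradedCommute D i j x y) : GradedCommute D j i y x := by
  rw [GradedCommute, h, smul_smul, mul_comm j i, neg_one_zpow_mul_self, one_smul]

lemma zero_left : GradedCommute D i j 0 y := by simp [GradedCommute]

lemma one_left : GradedCommute D 0 j D.one y := by simp [GradedCommute, D.one_mul, D.mul_one]

lemma add_left (h : GradedCommute D i j x y) (h' : GradedCommute D i j x' y) :
    GradedCommute D i j (x + x') y := by
  rw [GradedCommute] at *
  simp only [map_add, LinearMap.add_apply, smul_add, h, h']

lemma smul_left (c : k) (h : GradedCommute D i j x y) : GradedCommute D i j (c • x) y := by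
  rw [GradedCommute] at *
  simp only [map_smul, LinearMap.smul_apply, h, smul_comm c]

lemma mul_left (h : GradedCommute D i j x y) (h' : GradedCommute D i' j x' y) :
    GradedCommute D (i + i') j (D.mul x x') y := by
  rw [GradedCommute] at *
  rw [D.mul_assoc, h', map_smul, ← D.mul_assoc, h, LinearMap.map_smul₂, D.mul_assoc, smul_smul,
    add_mul, neg_one_zpow_add, mul_comm]

lemma mul_mul_mul_comm (h : GradedCommute D i j x y) (w z : N) :
    D.mul (D.mul w x) (D.mul y z) = ((-1 : k) ^ (i * j)) • D.mul (D.mul w y) (D.mul x z) := by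
  rw [D.mul_assoc, ← D.mul_assoc x, h, LinearMap.map_smul₂, map_smul, D.mul_assoc, D.mul_assoc]

lemma d_left (hx : x ∈ D.gr i) (hy : y ∈ D.gr j) (h : GradedCommute D i j x y)
    (hd : GradedCommute D i (j + 1) x (D.d y)) : GradedCommute D (i + 1) j (D.d x) y := by
  rw [GradedCommute] at *
  have hdd := congrArg D.d h
  rw [map_smul, D.d_mul hx hy, D.d_mul hy hx, hd] at hdd
  rw [eq_sub_of_add_eq hdd]
  simp only [mul_add, add_mul, mul_one, one_mul, neg_one_zpow_add]
  match_scalars <;> grind [neg_one_zpow_mul_self (k := k) i]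

end GradedCommute

/-- The homogeneous components of the graded centralizer in `D` of the homogeneous elements
`U j` of degree `j`. -/
def gradedCentralizer (D : DGAOn k N) (U : ℤ → Set N) (n : ℤ) : Submodule k N where
  carrier := {x | x ∈ D.gr n ∧ ∀ j, ∀ u ∈ U j, GradedCommute D n j x u}
  add_mem' hx hy := ⟨add_mem hx.1 hy.1, fun j u hu ↦ (hx.2 j u hu).add_left (hy.2 j u hu)⟩
  zero_mem' := ⟨zero_mem _, fun _ _ _ ↦ .zero_left⟩
  smul_mem' c _ hx := ⟨Submodule.smul_mem _ c hx.1, fun j u hu ↦ (hx.2 j u hu).smul_left c⟩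

lemma isDGSubalgebra_gradedCentralizer {D : DGAOn k N} {U : ℤ → Set N}
    (hU : ∀ {j u}, u ∈ U j → u ∈ D.gr j) (hdU : ∀ {j u}, u ∈ U j → D.d u ∈ U (j + 1)) :
    IsDGSubalgebra D (gradedCentralizer D U) where
  le_gr _ _ hx := hx.1
  one_mem := ⟨D.one_mem, fun _ _ _ ↦ .one_left⟩
  mul_mem hx hy := ⟨D.mul_mem hx.1 hy.1, fun j u hu ↦ (hx.2 j u hu).mul_left (hy.2 j u hu)⟩
  d_mem hx := ⟨D.d_mem hx.1, fun j u hu ↦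
    (hx.2 j u hu).d_left hx.1 (hU hu) (hx.2 (j + 1) (D.d u) (hdU hu))⟩

lemma IsUEnv.gradedCommute_map {M L : Type u} [AddCommGroup M] [Module k M] [AddCommGroup L]
    [Module k L] {P : DGPAOn k M} {E : DGAOn k L} {α β : M →ₗ[k] L} (h : IsUEnv P E α β)
    {D : DGAOn k N} {φ : L →ₗ[k] N} (hφ : IsDGAHom E D φ) {U : ℤ → Set N}
    (hU : ∀ {j u}, u ∈ U j → u ∈ D.gr j) (hdU : ∀ {j u}, u ∈ U j → D.d u ∈ U (j + 1))
    (hα : ∀ {i j a u}, a ∈ P.gr i → u ∈ U j → GradedCommute D i j (φ (α a)) u)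
    (hβ : ∀ {i j a u}, a ∈ P.gr i → u ∈ U j → GradedCommute D i j (φ (β a)) u)
    {i j : ℤ} {x : L} {u : N} (hx : x ∈ E.gr i) (hu : u ∈ U j) : GradedCommute D i j (φ x) u :=
  (h.map_mem_of_isDGSubalgebra hφ (isDGSubalgebra_gradedCentralizer hU hdU)
    (fun ha ↦ ⟨hφ.map_mem (h.uePair.fst_mem ha), fun _ _ ↦ hα ha⟩)
    (fun ha ↦ ⟨hφ.map_mem (h.uePair.snd_mem ha), fun _ _ ↦ hβ ha⟩) hx).2 j u hu

end GradedCommutation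

section UnderlyingAlgebra

variable {k : Type u} [Field k] {N : Type u} [AddCommGroup N] [Module k N]

/-- The ring underlying a differential graded algebra. -/
abbrev DGAOn.toRing (D : DGAOn k N) : Ring N :=
  { ‹AddCommGroup N› with
    mul := fun x y ↦ D.mul x y
    one := D.one
    zero_mul := LinearMap.map_zero₂ D.mul
    mul_zero := fun x ↦ map_zero (D.mul x)
    left_distrib := fun x ↦ map_add (D.mul x)
    right_distrib := LinearMap.map_add₂ D.mul
    mul_assoc := D.mul_assoc
    one_mul := D.one_mul
    mul_one := D.mul_one }

/-- The `k`-algebra structure on the ring underlying a differential graded `k`-algebra. -/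
abbrev DGAOn.toAlgebra (D : DGAOn k N) : letI := D.toRing; Algebra k N :=
  letI := D.toRing
  Algebra.ofModule (fun c x y ↦ LinearMap.map_smul₂ D.mul c x y) fun c x y ↦ map_smul (D.mul x) c y

end UnderlyingAlgebra

section MultiplicativeMaps

variable {k : Type u} [Field k] {N L : Type u} [AddCommGroup N] [Module k N] [AddCommGroup L]
  [Module k L]

/-- The homogeneous elements of degree `n` at which `φ : E → D` preserves the degree and commutes
with the differentials. -/
def dgLocus (E : DGAOn k N) (D : DGAOn k L) (φ : N →ₗ[k] L) (n : ℤ) : Submodule k N :=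
  E.gr n ⊓ (D.gr n).comap φ ⊓ LinearMap.eqLocus (φ ∘ₗ E.d) (D.d ∘ₗ φ)

lemma isGradedSubalgebra_dgLocus {E : DGAOn k N} {D : DGAOn k L} {φ : N →ₗ[k] L}
    (one : φ E.one = D.one) (mul : ∀ x y, φ (E.mul x y) = D.mul (φ x) (φ y)) :
    IsGradedSubalgebra E (dgLocus E D φ) where
  le_gr _ _ hx := hx.1.1
  one_mem := ⟨⟨E.one_mem, by simpa [one] using D.one_mem⟩, by simp [one, E.d_one, D.d_one]⟩
  mul_mem := by
    rintro i j x y ⟨⟨hx, hφx⟩, hdx⟩ ⟨⟨hy, hφy⟩, hdy⟩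
    have hdx : φ (E.d x) = D.d (φ x) := hdx
    have hdy : φ (E.d y) = D.d (φ y) := hdy
    refine ⟨⟨E.mul_mem hx hy, by simpa [mul] using D.mul_mem hφx hφy⟩, ?_⟩
    simp [E.d_mul hx hy, D.d_mul hφx hφy, mul, hdx, hdy]

end MultiplicativeMaps

namespace Env

variable {k : Type u} [Field k] {M : Type u} [AddCommGroup M] [Module k M] {P : DGPAOn k M}

lemma mgen_one : mgen P P.one = 1 := by
  simpa [mgen] using RingQuot.mkAlgHom_rel k (EnvRel.relone (P := P))

lemma mgen_mul (a b : M) : mgen P (P.mul a b) = mgen P a * mgen P b := by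
  simpa [mgen] using RingQuot.mkAlgHom_rel k (EnvRel.relmul (P := P) a b)

lemma hgen_mul {i j : ℤ} {a b : M} (ha : a ∈ P.gr i) (hb : b ∈ P.gr j) :
    hgen P (P.mul a b) = mgen P a * hgen P b + ((-1 : k) ^ (i * j)) • (mgen P b * hgen P a) := by
  simpa [mgen, hgen] using RingQuot.mkAlgHom_rel k (EnvRel.relhmul ha hb)

lemma mgen_br {i j : ℤ} {a b : M} (ha : a ∈ P.gr i) (hb : b ∈ P.gr j) :
    mgen P (P.br a b) = hgen P a * mgen P b - ((-1 : k) ^ (i * j)) • (mgen P b * hgen P a) := by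
  simpa [mgen, hgen] using RingQuot.mkAlgHom_rel k (EnvRel.relmbr ha hb)

lemma hgen_br {i j : ℤ} {a b : M} (ha : a ∈ P.gr i) (hb : b ∈ P.gr j) :
    hgen P (P.br a b) = hgen P a * hgen P b - ((-1 : k) ^ (i * j)) • (hgen P b * hgen P a) := by
  simpa [hgen] using RingQuot.mkAlgHom_rel k (EnvRel.relhbr ha hb)

lemma mkAlgHom_ι (v : M × M) :
    RingQuot.mkAlgHom k (EnvRel P) (TensorAlgebra.ι k v) = mgen P v.1 + hgen P v.2 := by
  simp only [mgen, hgen, LinearMap.comp_apply, AlgHom.toLinearMap_apply, ← map_add,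
    LinearMap.inl_apply, LinearMap.inr_apply, Prod.mk_add_mk, add_zero, zero_add]

lemma submodule_eq_top {S : Submodule k (Env P)} (one : 1 ∈ S)
    (mul : ∀ {x y}, x ∈ S → y ∈ S → x * y ∈ S) (hm : ∀ a, mgen P a ∈ S)
    (hh : ∀ a, hgen P a ∈ S) : S = ⊤ := by
  refine eq_top_iff.mpr fun x _ ↦ ?_
  obtain ⟨t, rfl⟩ := RingQuot.mkAlgHom_surjective k (EnvRel P) x
  induction t using TensorAlgebra.induction with
  | algebraMap c =>
    rw [AlgHom.commutes, Algebra.algebraMap_eq_smul_one]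
    exact S.smul_mem c one
  | ι v =>
    rw [mkAlgHom_ι]
    exact S.add_mem (hm v.1) (hh v.2)
  | mul s t hs ht =>
    rw [map_mul]
    exact mul (hs trivial) (ht trivial)
  | add s t hs ht =>
    rw [map_add]
    exact S.add_mem (hs trivial) (ht trivial)

lemma exists_algHom {S : Type u} [Ring S] [Algebra k S] {f g : M →ₗ[k] S} (one : f P.one = 1)
    (mul : ∀ a b, f (P.mul a b) = f a * f b)
    (hmul : ∀ {i j a b}, a ∈ P.gr i → b ∈ P.gr j →
      g (P.mul a b) = f a * g b + ((-1 : k) ^ (i * j)) • (f b * g a))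
    (mbr : ∀ {i j a b}, a ∈ P.gr i → b ∈ P.gr j →
      f (P.br a b) = g a * f b - ((-1 : k) ^ (i * j)) • (f b * g a))
    (hbr : ∀ {i j a b}, a ∈ P.gr i → b ∈ P.gr j →
      g (P.br a b) = g a * g b - ((-1 : k) ^ (i * j)) • (g b * g a)) :
    ∃ φ : Env P →ₐ[k] S, (∀ a, φ (mgen P a) = f a) ∧ ∀ a, φ (hgen P a) = g a := by
  have hrel : ∀ ⦃s t⦄, EnvRel P s t →
      TensorAlgebra.lift k (f.coprod g) s = TensorAlgebra.lift k (f.coprod g) t := by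
    rintro _ _ (_ | ⟨a, b⟩ | ⟨ha, hb⟩ | ⟨ha, hb⟩ | ⟨ha, hb⟩)
    · simp [one]
    · simp [mul]
    · simp [hmul ha hb]
    · simp [mbr ha hb]
    · simp [hbr ha hb]
  exact ⟨RingQuot.liftAlgHom k ⟨TensorAlgebra.lift k (f.coprod g), hrel⟩,
    fun a ↦ by simp [mgen], fun a ↦ by simp [hgen]⟩

end Env

namespace UEPair

variable {k : Type u} [Field k] {M N : Type u} [AddCommGroup M] [Module k M] [AddCommGroup N]
  [Module k N] {P : DGPAOn k M} {D : DGAOn k N} {f g : M →ₗ[k] N}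

lemma exists_multiplicative_lift (h : UEPair P D f g) :
    ∃ φ : Env P →ₗ[k] N, φ 1 = D.one ∧ (∀ x y, φ (x * y) = D.mul (φ x) (φ y)) ∧
      (∀ a, φ (mgen P a) = f a) ∧ ∀ a, φ (hgen P a) = g a := by
  let _ := D.toRing
  let _ := D.toAlgebra
  obtain ⟨φ, hm, hh⟩ := Env.exists_algHom h.fst_one h.fst_mul h.snd_mul h.fst_br h.snd_br
  exact ⟨φ.toLinearMap, map_one φ, map_mul φ, hm, hh⟩

end UEPair

namespace IsEnvDGA

variable {k : Type u} [Field k] {M : Type u} [AddCommGroup M] [Module k M] {P : DGPAOn k M}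
  {E : DGAOn k (Env P)}

lemma mul_eq (hE : IsEnvDGA P E) (x y : Env P) : E.mul x y = x * y := hE.1 x y

lemma one_eq (hE : IsEnvDGA P E) : E.one = 1 := hE.2.1

lemma mgen_mem (hE : IsEnvDGA P E) {i : ℤ} {a : M} (ha : a ∈ P.gr i) : mgen P a ∈ E.gr i :=
  hE.2.2.1 ha

lemma hgen_mem (hE : IsEnvDGA P E) {i : ℤ} {a : M} (ha : a ∈ P.gr i) : hgen P a ∈ E.gr i :=
  hE.2.2.2.1 ha

lemma d_mgen (hE : IsEnvDGA P E) (a : M) : E.d (mgen P a) = mgen P (P.d a) := hE.2.2.2.2.1 a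

lemma d_hgen (hE : IsEnvDGA P E) (a : M) : E.d (hgen P a) = hgen P (P.d a) := hE.2.2.2.2.2 a

lemma uePair (hE : IsEnvDGA P E) : UEPair P E (mgen P) (hgen P) :=
  ⟨hE.mgen_mem, hE.hgen_mem, fun a b ↦ by rw [hE.mul_eq, Env.mgen_mul],
    by rw [hE.one_eq, Env.mgen_one], fun a ↦ (hE.d_mgen a).symm, fun a ↦ (hE.d_hgen a).symm,
    fun ha hb ↦ by rw [hE.mul_eq, hE.mul_eq, Env.hgen_br ha hb],
    fun ha hb ↦ by rw [hE.mul_eq, hE.mul_eq, Env.mgen_br ha hb],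
    fun ha hb ↦ by rw [hE.mul_eq, hE.mul_eq, Env.hgen_mul ha hb]⟩

lemma gradedSubalgebra_eq_gr (hE : IsEnvDGA P E) {H : ℤ → Submodule k (Env P)}
    (hH : IsGradedSubalgebra E H) (hm : ∀ {i a}, a ∈ P.gr i → mgen P a ∈ H i)
    (hh : ∀ {i a}, a ∈ P.gr i → hgen P a ∈ H i) : H = E.gr := by
  refine eq_gr_of_le_of_iSup_eq_top E.decomp hH.le_gr (Env.submodule_eq_top ?_ ?_ ?_ ?_)
  · exact hE.one_eq ▸ Submodule.mem_iSup_of_mem 0 hH.one_mem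
  · exact fun hx hy ↦ hE.mul_eq _ _ ▸ hH.mul_mem_iSup hx hy
  · exact apply_mem_iSup P.decomp hm
  · exact apply_mem_iSup P.decomp hh

variable {N : Type u} [AddCommGroup N] [Module k N] {D : DGAOn k N} {f g : M →ₗ[k] N}

lemma isDGAHom_of_uePair (hE : IsEnvDGA P E) (h : UEPair P D f g) {φ : Env P →ₗ[k] N}
    (one : φ E.one = D.one) (mul : ∀ x y, φ (E.mul x y) = D.mul (φ x) (φ y))
    (hm : ∀ a, φ (mgen P a) = f a) (hh : ∀ a, φ (hgen P a) = g a) : IsDGAHom E D φ := by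
  have hlocus : dgLocus E D φ = E.gr :=
    hE.gradedSubalgebra_eq_gr (isGradedSubalgebra_dgLocus one mul)
      (fun ha ↦ ⟨⟨hE.mgen_mem ha, by simpa [hm] using h.fst_mem ha⟩,
        by simp [hE.d_mgen, hm, h.fst_d]⟩)
      (fun ha ↦ ⟨⟨hE.hgen_mem ha, by simpa [hh] using h.snd_mem ha⟩,
        by simp [hE.d_hgen, hh, h.snd_d]⟩)
  have mem_locus : ∀ {n x}, x ∈ E.gr n → x ∈ dgLocus E D φ n := fun hx ↦ hlocus ▸ hx
  have hd : φ ∘ₗ E.d = D.d ∘ₗ φ :=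
    linearMap_ext_of_decomposition E.decomp fun hx ↦ (mem_locus hx).2
  exact ⟨fun hx ↦ (mem_locus hx).1.2, mul, one, LinearMap.congr_fun hd⟩

lemma hom_ext (hE : IsEnvDGA P E) {φ ψ : Env P →ₗ[k] N} (hφ : IsDGAHom E D φ)
    (hψ : IsDGAHom E D ψ) (hm : ∀ a, φ (mgen P a) = ψ (mgen P a))
    (hh : ∀ a, φ (hgen P a) = ψ (hgen P a)) : φ = ψ := by
  refine LinearMap.eqLocus_eq_top.mp (Env.submodule_eq_top ?_ ?_ hm hh)
  · simp [← hE.one_eq, hφ.map_one, hψ.map_one]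
  · intro x y hx hy
    simp_all [← hE.mul_eq, hφ.map_mul, hψ.map_mul]

lemma isUEnv (hE : IsEnvDGA P E) : IsUEnv P E (mgen P) (hgen P) := by
  refine ⟨hE.uePair, fun N _ _ D f g h ↦ ?_⟩
  obtain ⟨φ, hone, hmul, hm, hh⟩ := h.exists_multiplicative_lift
  have hφ : IsDGAHom E D φ := hE.isDGAHom_of_uePair h (hE.one_eq ▸ hone)
    (fun x y ↦ hE.mul_eq x y ▸ hmul x y) hm hh
  exact ⟨φ, ⟨hφ, hm, hh⟩, fun ψ ⟨hψ, hψm, hψh⟩ ↦ hE.hom_ext hψ hφ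
    (fun a ↦ by rw [hψm, hm]) (fun a ↦ by rw [hψh, hh])⟩

end IsEnvDGA

section TensorStructures

variable {k : Type u} [Field k]
variable {A B N : Type u} [AddCommGroup A] [Module k A] [AddCommGroup B] [Module k B]
  [AddCommGroup N] [Module k N]

namespace IsTensorDGPA

variable {P : DGPAOn k A} {Q : DGPAOn k B} {R : DGPAOn k (A ⊗[k] B)}
  {i j i' j' : ℤ} {a a' : A} {b b' : B}

lemma gr_eq (hR : IsTensorDGPA P Q R) (n : ℤ) : R.gr n = tensorGr P.gr Q.gr n := hR.1 n

lemma tmul_mem (hR : IsTensorDGPA P Q R) (ha : a ∈ P.gr i) (hb : b ∈ Q.gr j) :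
    a ⊗ₜ[k] b ∈ R.gr (i + j) := hR.gr_eq _ ▸ tmul_mem_tensorGr ha hb

lemma one_eq (hR : IsTensorDGPA P Q R) : R.one = P.one ⊗ₜ[k] Q.one := hR.2.1

lemma mul_tmul (hR : IsTensorDGPA P Q R) (ha : a ∈ P.gr i) (hb : b ∈ Q.gr j)
    (ha' : a' ∈ P.gr i') (hb' : b' ∈ Q.gr j') :
    R.mul (a ⊗ₜ[k] b) (a' ⊗ₜ[k] b') =
      ((-1 : k) ^ (i' * j)) • (P.mul a a' ⊗ₜ[k] Q.mul b b') := hR.2.2.1 ha hb ha' hb'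

lemma d_tmul (hR : IsTensorDGPA P Q R) (ha : a ∈ P.gr i) (hb : b ∈ Q.gr j) :
    R.d (a ⊗ₜ[k] b) = P.d a ⊗ₜ[k] b + ((-1 : k) ^ i) • (a ⊗ₜ[k] Q.d b) := hR.2.2.2.1 ha hb

lemma br_tmul (hR : IsTensorDGPA P Q R) (ha : a ∈ P.gr i) (hb : b ∈ Q.gr j)
    (ha' : a' ∈ P.gr i') (hb' : b' ∈ Q.gr j') :
    R.br (a ⊗ₜ[k] b) (a' ⊗ₜ[k] b') = ((-1 : k) ^ (i' * j)) •
      (P.br a a' ⊗ₜ[k] Q.mul b b' + P.mul a a' ⊗ₜ[k] Q.br b b') := hR.2.2.2.2 ha hb ha' hb'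

lemma tmul_one_mem (hR : IsTensorDGPA P Q R) (ha : a ∈ P.gr i) : a ⊗ₜ[k] Q.one ∈ R.gr i := by
  simpa using hR.tmul_mem ha Q.one_mem

lemma one_tmul_mem (hR : IsTensorDGPA P Q R) (hb : b ∈ Q.gr j) : P.one ⊗ₜ[k] b ∈ R.gr j := by
  simpa using hR.tmul_mem P.one_mem hb

lemma mul_tmul_one_one_tmul (hR : IsTensorDGPA P Q R) (ha : a ∈ P.gr i) (hb : b ∈ Q.gr j) :
    R.mul (a ⊗ₜ[k] Q.one) (P.one ⊗ₜ[k] b) = a ⊗ₜ[k] b := by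
  simp [hR.mul_tmul ha Q.one_mem P.one_mem hb, P.mul_one, Q.one_mul]

lemma br_tmul_one_one_tmul (hR : IsTensorDGPA P Q R) (ha : a ∈ P.gr i) (hb : b ∈ Q.gr j) :
    R.br (a ⊗ₜ[k] Q.one) (P.one ⊗ₜ[k] b) = 0 := by
  simp [hR.br_tmul ha Q.one_mem P.one_mem hb, P.br_one, Q.one_br]

lemma isDGPAHom_tmul_one (hR : IsTensorDGPA P Q R) :
    IsDGPAHom P R ((TensorProduct.mk k A B).flip Q.one) := by
  set ι := (TensorProduct.mk k A B).flip Q.one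
  have mul : P.mul.compr₂ ι = R.mul.compl₁₂ ι ι :=
    bilinearMap_ext_of_decomposition P.decomp P.decomp fun ha ha' ↦ by
      simp [ι, hR.mul_tmul ha Q.one_mem ha' Q.one_mem, Q.mul_one]
  have d : ι ∘ₗ P.d = R.d ∘ₗ ι := linearMap_ext_of_decomposition P.decomp fun ha ↦ by
    simp [ι, hR.d_tmul ha Q.one_mem, Q.d_one]
  have br : P.br.compr₂ ι = R.br.compl₁₂ ι ι :=
    bilinearMap_ext_of_decomposition P.decomp P.decomp fun ha ha' ↦ by
      simp [ι, hR.br_tmul ha Q.one_mem ha' Q.one_mem, Q.mul_one, Q.br_one]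
  exact ⟨hR.tmul_one_mem, LinearMap.congr_fun₂ mul, hR.one_eq.symm, LinearMap.congr_fun d,
    LinearMap.congr_fun₂ br⟩

lemma isDGPAHom_one_tmul (hR : IsTensorDGPA P Q R) :
    IsDGPAHom Q R (TensorProduct.mk k A B P.one) := by
  set ι := TensorProduct.mk k A B P.one
  have mul : Q.mul.compr₂ ι = R.mul.compl₁₂ ι ι :=
    bilinearMap_ext_of_decomposition Q.decomp Q.decomp fun hb hb' ↦ by
      simp [ι, hR.mul_tmul P.one_mem hb P.one_mem hb', P.mul_one]
  have d : ι ∘ₗ Q.d = R.d ∘ₗ ι := linearMap_ext_of_decomposition Q.decomp fun hb ↦ by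
    simp [ι, hR.d_tmul P.one_mem hb, P.d_one]
  have br : Q.br.compr₂ ι = R.br.compl₁₂ ι ι :=
    bilinearMap_ext_of_decomposition Q.decomp Q.decomp fun hb hb' ↦ by
      simp [ι, hR.br_tmul P.one_mem hb P.one_mem hb', P.mul_one, P.br_one]
  exact ⟨hR.one_tmul_mem, LinearMap.congr_fun₂ mul, hR.one_eq.symm, LinearMap.congr_fun d,
    LinearMap.congr_fun₂ br⟩

end IsTensorDGPA

namespace IsTensorDGA

variable {E : DGAOn k A} {F : DGAOn k B} {G : DGAOn k (A ⊗[k] B)} {D : DGAOn k N}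
  {i j i' j' : ℤ} {x x' : A} {y y' : B}

lemma gr_eq (hG : IsTensorDGA E F G) (n : ℤ) : G.gr n = tensorGr E.gr F.gr n := hG.1 n

lemma tmul_mem (hG : IsTensorDGA E F G) (hx : x ∈ E.gr i) (hy : y ∈ F.gr j) :
    x ⊗ₜ[k] y ∈ G.gr (i + j) := hG.gr_eq _ ▸ tmul_mem_tensorGr hx hy

lemma one_eq (hG : IsTensorDGA E F G) : G.one = E.one ⊗ₜ[k] F.one := hG.2.1

lemma mul_tmul (hG : IsTensorDGA E F G) (hx : x ∈ E.gr i) (hy : y ∈ F.gr j)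
    (hx' : x' ∈ E.gr i') (hy' : y' ∈ F.gr j') :
    G.mul (x ⊗ₜ[k] y) (x' ⊗ₜ[k] y') =
      ((-1 : k) ^ (i' * j)) • (E.mul x x' ⊗ₜ[k] F.mul y y') := hG.2.2.1 hx hy hx' hy'

lemma d_tmul (hG : IsTensorDGA E F G) (hx : x ∈ E.gr i) (hy : y ∈ F.gr j) :
    G.d (x ⊗ₜ[k] y) = E.d x ⊗ₜ[k] y + ((-1 : k) ^ i) • (x ⊗ₜ[k] F.d y) := hG.2.2.2 hx hy

lemma mul_tmul_one_one_tmul (hG : IsTensorDGA E F G) (hx : x ∈ E.gr i) (hy : y ∈ F.gr j) :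
    G.mul (x ⊗ₜ[k] F.one) (E.one ⊗ₜ[k] y) = x ⊗ₜ[k] y := by
  simp [hG.mul_tmul hx F.one_mem E.one_mem hy, E.mul_one, F.one_mul]

lemma isDGAHom_tmul_one (hG : IsTensorDGA E F G) :
    IsDGAHom E G ((TensorProduct.mk k A B).flip F.one) := by
  set ι := (TensorProduct.mk k A B).flip F.one
  have mul : E.mul.compr₂ ι = G.mul.compl₁₂ ι ι :=
    bilinearMap_ext_of_decomposition E.decomp E.decomp fun hx hx' ↦ by
      simp [ι, hG.mul_tmul hx F.one_mem hx' F.one_mem, F.mul_one]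
  have d : ι ∘ₗ E.d = G.d ∘ₗ ι := linearMap_ext_of_decomposition E.decomp fun hx ↦ by
    simp [ι, hG.d_tmul hx F.one_mem, F.d_one]
  exact ⟨fun hx ↦ by simpa [ι] using hG.tmul_mem hx F.one_mem, LinearMap.congr_fun₂ mul,
    hG.one_eq.symm, LinearMap.congr_fun d⟩

lemma isDGAHom_one_tmul (hG : IsTensorDGA E F G) :
    IsDGAHom F G (TensorProduct.mk k A B E.one) := by
  set ι := TensorProduct.mk k A B E.one
  have mul : F.mul.compr₂ ι = G.mul.compl₁₂ ι ι :=
    bilinearMap_ext_of_decomposition F.decomp F.decomp fun hy hy' ↦ by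
      simp [ι, hG.mul_tmul E.one_mem hy E.one_mem hy', E.mul_one]
  have d : ι ∘ₗ F.d = G.d ∘ₗ ι := linearMap_ext_of_decomposition F.decomp fun hy ↦ by
    simp [ι, hG.d_tmul E.one_mem hy, E.d_one]
  exact ⟨fun hy ↦ by simpa [ι] using hG.tmul_mem E.one_mem hy, LinearMap.congr_fun₂ mul,
    hG.one_eq.symm, LinearMap.congr_fun d⟩

lemma hom_ext (hG : IsTensorDGA E F G) {φ ψ : A ⊗[k] B →ₗ[k] N} (hφ : IsDGAHom G D φ)
    (hψ : IsDGAHom G D ψ) (hl : ∀ x, φ (x ⊗ₜ[k] F.one) = ψ (x ⊗ₜ[k] F.one))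
    (hr : ∀ y, φ (E.one ⊗ₜ[k] y) = ψ (E.one ⊗ₜ[k] y)) : φ = ψ :=
  tensorProduct_ext_of_decomposition E.decomp F.decomp fun hx hy ↦ by
    rw [← hG.mul_tmul_one_one_tmul hx hy, hφ.map_mul, hψ.map_mul, hl, hr]

lemma isDGAHom_lift (hG : IsTensorDGA E F G) {φ : A →ₗ[k] N} {ψ : B →ₗ[k] N}
    (hφ : IsDGAHom E D φ) (hψ : IsDGAHom F D ψ)
    (hcomm : ∀ {i j x y}, x ∈ E.gr i → y ∈ F.gr j → GradedCommute D i j (φ x) (ψ y)) :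
    IsDGAHom G D (TensorProduct.lift (D.mul.compl₁₂ φ ψ)) := by
  set Φ := TensorProduct.lift (D.mul.compl₁₂ φ ψ)
  have hΦ : ∀ x y, Φ (x ⊗ₜ y) = D.mul (φ x) (ψ y) := fun _ _ ↦ rfl
  have mul : G.mul.compr₂ Φ = D.mul.compl₁₂ Φ Φ :=
    tensorProduct_ext₂_of_decomposition E.decomp F.decomp fun hx hy hx' hy' ↦ by
      simp [hΦ, hG.mul_tmul hx hy hx' hy', hφ.map_mul, hψ.map_mul,
        (hcomm hx' hy).symm.mul_mul_mul_comm, mul_comm]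
  have d : Φ ∘ₗ G.d = D.d ∘ₗ Φ :=
    tensorProduct_ext_of_decomposition E.decomp F.decomp fun hx hy ↦ by
      simp [hΦ, hG.d_tmul hx hy, D.d_mul (hφ.map_mem hx) (hψ.map_mem hy), hφ.map_d, hψ.map_d]
  refine ⟨fun {n z} hz ↦ apply_mem_of_mem_tensorGr (fun hij hx hy ↦ ?_) (hG.gr_eq n ▸ hz),
    LinearMap.congr_fun₂ mul, ?_, LinearMap.congr_fun d⟩
  · exact hij ▸ D.mul_mem (hφ.map_mem hx) (hψ.map_mem hy)
  · rw [hG.one_eq, hΦ, hφ.map_one, hψ.map_one, D.one_mul]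

end IsTensorDGA

end TensorStructures

section TensorPairs

variable {k : Type u} [Field k]
variable {A B M N : Type u} [AddCommGroup A] [Module k A] [AddCommGroup B] [Module k B]
  [AddCommGroup M] [Module k M] [AddCommGroup N] [Module k N]

/-- The map `h = m ⊗ h' + h ⊗ m'` built from pairs `(α, β) = (m, h)` and `(γ, δ) = (m', h')`;
it is the Lie component of the tensor product of the two pairs, whose algebra component is
`TensorProduct.map α γ`. -/
abbrev tensorSnd (α β : A →ₗ[k] M) (γ δ : B →ₗ[k] N) : A ⊗[k] B →ₗ[k] M ⊗[k] N :=
  TensorProduct.map α δ + TensorProduct.map β γ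

namespace UEPair

variable {P : DGPAOn k A} {Q : DGPAOn k B} {R : DGPAOn k (A ⊗[k] B)}
  {E : DGAOn k M} {F : DGAOn k N} {G : DGAOn k (M ⊗[k] N)}
  {α β : A →ₗ[k] M} {γ δ : B →ₗ[k] N} {i j i' j' : ℤ} {a a' : A} {b b' : B}

lemma mul_snd_fst_swap (h : UEPair P E α β) (ha : a ∈ P.gr i) (ha' : a' ∈ P.gr i') :
    E.mul (β a') (α a) = ((-1 : k) ^ (i * i')) • E.mul (α a) (β a') -
      ((-1 : k) ^ (i * i')) • E.mul (β a) (α a') + E.mul (α a') (β a) := by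
  have hbr := h.fst_br ha' ha
  rw [P.br_antisymm ha' ha, mul_comm i' i, map_neg, map_smul, h.fst_br ha ha'] at hbr
  -- By antisymmetry `hbr` now compares two expressions for `α {a, a'}`.
  rw [eq_add_of_sub_eq hbr.symm]
  match_scalars <;> grind [neg_one_zpow_mul_self (k := k) (i * i')]

lemma tensorSnd_mul_tmul (hR : IsTensorDGPA P Q R) (hG : IsTensorDGA E F G)
    (hP : UEPair P E α β) (hQ : UEPair Q F γ δ) (ha : a ∈ P.gr i) (hb : b ∈ Q.gr j)
    (ha' : a' ∈ P.gr i') (hb' : b' ∈ Q.gr j') :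
    tensorSnd α β γ δ (R.mul (a ⊗ₜ b) (a' ⊗ₜ b')) =
      G.mul (TensorProduct.map α γ (a ⊗ₜ b)) (tensorSnd α β γ δ (a' ⊗ₜ b')) +
        ((-1 : k) ^ ((i + j) * (i' + j'))) •
          G.mul (TensorProduct.map α γ (a' ⊗ₜ b')) (tensorSnd α β γ δ (a ⊗ₜ b)) := by
  simp only [map_add, map_smul, LinearMap.add_apply, TensorProduct.map_tmul,
    hR.mul_tmul ha hb ha' hb', hP.fst_mul, hQ.fst_mul, hP.snd_mul ha ha', hQ.snd_mul hb hb',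
    hG.mul_tmul (hP.fst_mem ha) (hQ.fst_mem hb) (hP.fst_mem ha') (hQ.snd_mem hb'),
    hG.mul_tmul (hP.fst_mem ha) (hQ.fst_mem hb) (hP.snd_mem ha') (hQ.fst_mem hb'),
    hG.mul_tmul (hP.fst_mem ha') (hQ.fst_mem hb') (hP.fst_mem ha) (hQ.snd_mem hb),
    hG.mul_tmul (hP.fst_mem ha') (hQ.fst_mem hb') (hP.snd_mem ha) (hQ.fst_mem hb),
    hP.mul_fst_fst_swap ha' ha, hQ.mul_fst_fst_swap hb' hb,
    TensorProduct.add_tmul, TensorProduct.tmul_add, TensorProduct.tmul_smul,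
    ← TensorProduct.smul_tmul', mul_comm i' i, mul_comm j' j, neg_one_zpow_add_mul_add]
  -- The Koszul signs are scalars `ε` with `ε * ε = 1`; comparing coefficients leaves polynomial
  -- identities in them.
  match_scalars <;> grind [neg_one_zpow_mul_self (k := k) (i * i'),
    neg_one_zpow_mul_self (k := k) (i * j'), neg_one_zpow_mul_self (k := k) (i' * j),
    neg_one_zpow_mul_self (k := k) (j * j')]

lemma map_br_tmul (hR : IsTensorDGPA P Q R) (hG : IsTensorDGA E F G)
    (hP : UEPair P E α β) (hQ : UEPair Q F γ δ) (ha : a ∈ P.gr i) (hb : b ∈ Q.gr j)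
    (ha' : a' ∈ P.gr i') (hb' : b' ∈ Q.gr j') :
    TensorProduct.map α γ (R.br (a ⊗ₜ b) (a' ⊗ₜ b')) =
      G.mul (tensorSnd α β γ δ (a ⊗ₜ b)) (TensorProduct.map α γ (a' ⊗ₜ b')) -
        ((-1 : k) ^ ((i + j) * (i' + j'))) •
          G.mul (TensorProduct.map α γ (a' ⊗ₜ b')) (tensorSnd α β γ δ (a ⊗ₜ b)) := by
  simp only [map_add, map_smul, LinearMap.add_apply, TensorProduct.map_tmul,
    hR.br_tmul ha hb ha' hb', hP.fst_mul, hQ.fst_mul, hP.fst_br ha ha', hQ.fst_br hb hb',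
    hG.mul_tmul (hP.fst_mem ha) (hQ.snd_mem hb) (hP.fst_mem ha') (hQ.fst_mem hb'),
    hG.mul_tmul (hP.snd_mem ha) (hQ.fst_mem hb) (hP.fst_mem ha') (hQ.fst_mem hb'),
    hG.mul_tmul (hP.fst_mem ha') (hQ.fst_mem hb') (hP.fst_mem ha) (hQ.snd_mem hb),
    hG.mul_tmul (hP.fst_mem ha') (hQ.fst_mem hb') (hP.snd_mem ha) (hQ.fst_mem hb),
    hP.mul_fst_fst_swap ha' ha, hQ.mul_fst_fst_swap hb' hb,
    TensorProduct.sub_tmul, TensorProduct.tmul_sub, TensorProduct.tmul_smul,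
    ← TensorProduct.smul_tmul', mul_comm i' i, mul_comm j' j, neg_one_zpow_add_mul_add]
  match_scalars <;> grind [neg_one_zpow_mul_self (k := k) (i * i'),
    neg_one_zpow_mul_self (k := k) (i * j'), neg_one_zpow_mul_self (k := k) (i' * j),
    neg_one_zpow_mul_self (k := k) (j * j')]

lemma tensorSnd_br_tmul (hR : IsTensorDGPA P Q R) (hG : IsTensorDGA E F G)
    (hP : UEPair P E α β) (hQ : UEPair Q F γ δ) (ha : a ∈ P.gr i) (hb : b ∈ Q.gr j)
    (ha' : a' ∈ P.gr i') (hb' : b' ∈ Q.gr j') :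
    tensorSnd α β γ δ (R.br (a ⊗ₜ b) (a' ⊗ₜ b')) =
      G.mul (tensorSnd α β γ δ (a ⊗ₜ b)) (tensorSnd α β γ δ (a' ⊗ₜ b')) -
        ((-1 : k) ^ ((i + j) * (i' + j'))) •
          G.mul (tensorSnd α β γ δ (a' ⊗ₜ b')) (tensorSnd α β γ δ (a ⊗ₜ b)) := by
  simp only [map_add, map_smul, LinearMap.add_apply, TensorProduct.map_tmul,
    hR.br_tmul ha hb ha' hb', hP.fst_mul, hQ.fst_mul, hP.fst_br ha ha', hQ.fst_br hb hb',
    hP.snd_mul ha ha', hQ.snd_mul hb hb', hP.snd_br ha ha', hQ.snd_br hb hb',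
    hG.mul_tmul (hP.fst_mem ha) (hQ.snd_mem hb) (hP.fst_mem ha') (hQ.snd_mem hb'),
    hG.mul_tmul (hP.fst_mem ha) (hQ.snd_mem hb) (hP.snd_mem ha') (hQ.fst_mem hb'),
    hG.mul_tmul (hP.snd_mem ha) (hQ.fst_mem hb) (hP.fst_mem ha') (hQ.snd_mem hb'),
    hG.mul_tmul (hP.snd_mem ha) (hQ.fst_mem hb) (hP.snd_mem ha') (hQ.fst_mem hb'),
    hG.mul_tmul (hP.fst_mem ha') (hQ.snd_mem hb') (hP.fst_mem ha) (hQ.snd_mem hb),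
    hG.mul_tmul (hP.fst_mem ha') (hQ.snd_mem hb') (hP.snd_mem ha) (hQ.fst_mem hb),
    hG.mul_tmul (hP.snd_mem ha') (hQ.fst_mem hb') (hP.fst_mem ha) (hQ.snd_mem hb),
    hG.mul_tmul (hP.snd_mem ha') (hQ.fst_mem hb') (hP.snd_mem ha) (hQ.fst_mem hb),
    hP.mul_fst_fst_swap ha' ha, hQ.mul_fst_fst_swap hb' hb,
    hP.mul_snd_fst_swap ha ha', hQ.mul_snd_fst_swap hb hb',
    TensorProduct.add_tmul, TensorProduct.tmul_add, TensorProduct.sub_tmul,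
    TensorProduct.tmul_sub, TensorProduct.tmul_smul,
    ← TensorProduct.smul_tmul', mul_comm i' i, mul_comm j' j, neg_one_zpow_add_mul_add]
  match_scalars <;> grind [neg_one_zpow_mul_self (k := k) (i * i'),
    neg_one_zpow_mul_self (k := k) (i * j'), neg_one_zpow_mul_self (k := k) (i' * j),
    neg_one_zpow_mul_self (k := k) (j * j')]

lemma map_mem_gr (hR : IsTensorDGPA P Q R) (hG : IsTensorDGA E F G) (hP : UEPair P E α β)
    (hQ : UEPair Q F γ δ) {n : ℤ} {z : A ⊗[k] B} (hz : z ∈ R.gr n) :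
    TensorProduct.map α γ z ∈ G.gr n := by
  rw [hR.gr_eq] at hz
  refine apply_mem_of_mem_tensorGr (fun hij ha hb ↦ ?_) hz
  exact hij ▸ hG.tmul_mem (hP.fst_mem ha) (hQ.fst_mem hb)

lemma tensorSnd_mem_gr (hR : IsTensorDGPA P Q R) (hG : IsTensorDGA E F G) (hP : UEPair P E α β)
    (hQ : UEPair Q F γ δ) {n : ℤ} {z : A ⊗[k] B} (hz : z ∈ R.gr n) :
    tensorSnd α β γ δ z ∈ G.gr n := by
  rw [hR.gr_eq] at hz
  refine apply_mem_of_mem_tensorGr (fun hij ha hb ↦ ?_) hz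
  exact hij ▸ add_mem (hG.tmul_mem (hP.fst_mem ha) (hQ.snd_mem hb))
    (hG.tmul_mem (hP.snd_mem ha) (hQ.fst_mem hb))

lemma map_comp_d (hR : IsTensorDGPA P Q R) (hG : IsTensorDGA E F G) (hP : UEPair P E α β)
    (hQ : UEPair Q F γ δ) :
    TensorProduct.map α γ ∘ₗ R.d = G.d ∘ₗ TensorProduct.map α γ :=
  tensorProduct_ext_of_decomposition P.decomp Q.decomp fun ha hb ↦ by
    simp [hR.d_tmul ha hb, hG.d_tmul (hP.fst_mem ha) (hQ.fst_mem hb), hP.fst_d, hQ.fst_d]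

lemma tensorSnd_comp_d (hR : IsTensorDGPA P Q R) (hG : IsTensorDGA E F G) (hP : UEPair P E α β)
    (hQ : UEPair Q F γ δ) :
    tensorSnd α β γ δ ∘ₗ R.d = G.d ∘ₗ tensorSnd α β γ δ :=
  tensorProduct_ext_of_decomposition P.decomp Q.decomp fun ha hb ↦ by
    simp only [LinearMap.comp_apply, LinearMap.add_apply, TensorProduct.map_tmul, map_add,
      map_smul, hR.d_tmul ha hb, hG.d_tmul (hP.fst_mem ha) (hQ.snd_mem hb),
      hG.d_tmul (hP.snd_mem ha) (hQ.fst_mem hb), hP.fst_d, hP.snd_d, hQ.fst_d, hQ.snd_d]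
    module

lemma map_mul_tensor (hR : IsTensorDGPA P Q R) (hG : IsTensorDGA E F G) (hP : UEPair P E α β)
    (hQ : UEPair Q F γ δ) :
    R.mul.compr₂ (TensorProduct.map α γ) =
      G.mul.compl₁₂ (TensorProduct.map α γ) (TensorProduct.map α γ) :=
  tensorProduct_ext₂_of_decomposition P.decomp Q.decomp fun ha hb ha' hb' ↦ by
    simp [hR.mul_tmul ha hb ha' hb', hP.fst_mul, hQ.fst_mul,
      hG.mul_tmul (hP.fst_mem ha) (hQ.fst_mem hb) (hP.fst_mem ha') (hQ.fst_mem hb')]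

lemma tensor (hR : IsTensorDGPA P Q R) (hG : IsTensorDGA E F G) (hP : UEPair P E α β)
    (hQ : UEPair Q F γ δ) :
    UEPair R G (TensorProduct.map α γ) (tensorSnd α β γ δ) := by
  set f := TensorProduct.map α γ with hf
  set g := tensorSnd α β γ δ
  refine ⟨map_mem_gr hR hG hP hQ, tensorSnd_mem_gr hR hG hP hQ,
    LinearMap.congr_fun₂ (map_mul_tensor hR hG hP hQ), ?_,
    LinearMap.congr_fun (map_comp_d hR hG hP hQ),
    LinearMap.congr_fun (tensorSnd_comp_d hR hG hP hQ), ?_, ?_, ?_⟩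
  · rw [hf, hR.one_eq, hG.one_eq, TensorProduct.map_tmul, hP.fst_one, hQ.fst_one]
  · intro n n' z z' hz hz'
    rw [hR.gr_eq] at hz hz'
    refine bilinearMap_eq_of_mem_tensorGr (φ := R.br.compr₂ g)
      (ψ := G.mul.compl₁₂ g g - ((-1 : k) ^ (n * n')) • (G.mul.compl₁₂ g g).flip) ?_ hz hz'
    rintro i j i' j' a b a' b' rfl rfl ha hb ha' hb'
    exact tensorSnd_br_tmul hR hG hP hQ ha hb ha' hb'
  · intro n n' z z' hz hz'
    rw [hR.gr_eq] at hz hz'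
    refine bilinearMap_eq_of_mem_tensorGr (φ := R.br.compr₂ f)
      (ψ := G.mul.compl₁₂ g f - ((-1 : k) ^ (n * n')) • (G.mul.compl₁₂ f g).flip) ?_ hz hz'
    rintro i j i' j' a b a' b' rfl rfl ha hb ha' hb'
    exact map_br_tmul hR hG hP hQ ha hb ha' hb'
  · intro n n' z z' hz hz'
    rw [hR.gr_eq] at hz hz'
    refine bilinearMap_eq_of_mem_tensorGr (φ := R.mul.compr₂ g)
      (ψ := G.mul.compl₁₂ f g + ((-1 : k) ^ (n * n')) • (G.mul.compl₁₂ f g).flip) ?_ hz hz'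
    rintro i j i' j' a b a' b' rfl rfl ha hb ha' hb'
    exact tensorSnd_mul_tmul hR hG hP hQ ha hb ha' hb'

end UEPair

end TensorPairs

section TensorEnveloping

variable {k : Type u} [Field k]
variable {A B M N L : Type u} [AddCommGroup A] [Module k A] [AddCommGroup B] [Module k B]
  [AddCommGroup M] [Module k M] [AddCommGroup N] [Module k N] [AddCommGroup L] [Module k L]

namespace UEPair

variable {P : DGPAOn k A} {D : DGAOn k L} {f g : A →ₗ[k] L} {i j : ℤ} {a b : A}

lemma gradedCommute_snd_fst (h : UEPair P D f g) (ha : a ∈ P.gr i) (hb : b ∈ P.gr j)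
    (hab : P.br a b = 0) : GradedCommute D i j (g a) (f b) :=
  sub_eq_zero.mp (by rw [← h.fst_br ha hb, hab, map_zero])

lemma gradedCommute_fst_snd (h : UEPair P D f g) (ha : a ∈ P.gr i) (hb : b ∈ P.gr j)
    (hab : P.br a b = 0) : GradedCommute D i j (f a) (g b) :=
  (h.gradedCommute_snd_fst hb ha (by simp [P.br_antisymm hb ha, hab])).symm

lemma gradedCommute_snd_snd (h : UEPair P D f g) (ha : a ∈ P.gr i) (hb : b ∈ P.gr j)
    (hab : P.br a b = 0) : GradedCommute D i j (g a) (g b) :=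
  sub_eq_zero.mp (by rw [← h.snd_br ha hb, hab, map_zero])

end UEPair

variable {P : DGPAOn k A} {Q : DGPAOn k B} {R : DGPAOn k (A ⊗[k] B)}
  {E : DGAOn k M} {F : DGAOn k N} {G : DGAOn k (M ⊗[k] N)} {D : DGAOn k L}
  {α β : A →ₗ[k] M} {γ δ : B →ₗ[k] N}

lemma IsUEnv.gradedCommute_map_map (hE : IsUEnv P E α β) (hF : IsUEnv Q F γ δ)
    {φ : M →ₗ[k] L} {ψ : N →ₗ[k] L} (hφ : IsDGAHom E D φ) (hψ : IsDGAHom F D ψ)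
    (hαγ : ∀ {i j a b}, a ∈ P.gr i → b ∈ Q.gr j → GradedCommute D i j (φ (α a)) (ψ (γ b)))
    (hαδ : ∀ {i j a b}, a ∈ P.gr i → b ∈ Q.gr j → GradedCommute D i j (φ (α a)) (ψ (δ b)))
    (hβγ : ∀ {i j a b}, a ∈ P.gr i → b ∈ Q.gr j → GradedCommute D i j (φ (β a)) (ψ (γ b)))
    (hβδ : ∀ {i j a b}, a ∈ P.gr i → b ∈ Q.gr j → GradedCommute D i j (φ (β a)) (ψ (δ b)))
    {i j : ℤ} {x : M} {y : N} (hx : x ∈ E.gr i) (hy : y ∈ F.gr j) :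
    GradedCommute D i j (φ x) (ψ y) := by
  let U : ℤ → Set L := fun j ↦ (ψ ∘ γ) '' Q.gr j ∪ (ψ ∘ δ) '' Q.gr j
  have commute_generators : ∀ {i j x u}, x ∈ E.gr i → u ∈ U j → GradedCommute D i j (φ x) u := by
    refine hE.gradedCommute_map hφ ?_ ?_ ?_ ?_
    · rintro j _ (⟨b, hb, rfl⟩ | ⟨b, hb, rfl⟩)
      exacts [hψ.map_mem (hF.uePair.fst_mem hb), hψ.map_mem (hF.uePair.snd_mem hb)]
    · rintro j _ (⟨b, hb, rfl⟩ | ⟨b, hb, rfl⟩)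
      · exact .inl ⟨Q.d b, Q.d_mem hb, by simp [hF.uePair.fst_d, hψ.map_d]⟩
      · exact .inr ⟨Q.d b, Q.d_mem hb, by simp [hF.uePair.snd_d, hψ.map_d]⟩
    · rintro i j a _ ha (⟨b, hb, rfl⟩ | ⟨b, hb, rfl⟩)
      exacts [hαγ ha hb, hαδ ha hb]
    · rintro i j a _ ha (⟨b, hb, rfl⟩ | ⟨b, hb, rfl⟩)
      exacts [hβγ ha hb, hβδ ha hb]
  refine (hF.gradedCommute_map hψ (U := fun i ↦ φ '' E.gr i) ?_ ?_ ?_ ?_ hy ⟨x, hx, rfl⟩).symm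
  · rintro i _ ⟨x, hx, rfl⟩
    exact hφ.map_mem hx
  · rintro i _ ⟨x, hx, rfl⟩
    exact ⟨E.d x, E.d_mem hx, hφ.map_d x⟩
  · rintro j i b _ hb ⟨x, hx, rfl⟩
    exact (commute_generators hx (.inl ⟨b, hb, rfl⟩)).symm
  · rintro j i b _ hb ⟨x, hx, rfl⟩
    exact (commute_generators hx (.inr ⟨b, hb, rfl⟩)).symm

namespace UEPair

variable {f g : A ⊗[k] B →ₗ[k] L} {i j : ℤ} {a : A} {b : B}

lemma fst_tmul (hR : IsTensorDGPA P Q R) (h : UEPair R D f g) (ha : a ∈ P.gr i)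
    (hb : b ∈ Q.gr j) : f (a ⊗ₜ b) = D.mul (f (a ⊗ₜ Q.one)) (f (P.one ⊗ₜ b)) := by
  rw [← h.fst_mul, hR.mul_tmul_one_one_tmul ha hb]

lemma snd_tmul (hR : IsTensorDGPA P Q R) (h : UEPair R D f g) (ha : a ∈ P.gr i)
    (hb : b ∈ Q.gr j) :
    g (a ⊗ₜ b) = D.mul (f (a ⊗ₜ Q.one)) (g (P.one ⊗ₜ b)) +
      D.mul (g (a ⊗ₜ Q.one)) (f (P.one ⊗ₜ b)) := by
  have hcomm := h.gradedCommute_snd_fst (hR.tmul_one_mem ha) (hR.one_tmul_mem hb)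
    (hR.br_tmul_one_one_tmul ha hb)
  rw [← hR.mul_tmul_one_one_tmul ha hb, h.snd_mul (hR.tmul_one_mem ha) (hR.one_tmul_mem hb),
    ← hcomm]

end UEPair

namespace IsUEnv

lemma exists_lift_tensor (hE : IsUEnv P E α β) (hF : IsUEnv Q F γ δ) (hR : IsTensorDGPA P Q R)
    (hG : IsTensorDGA E F G) {f g : A ⊗[k] B →ₗ[k] L} (h : UEPair R D f g) :
    ∃ Φ : M ⊗[k] N →ₗ[k] L, IsDGAHom G D Φ ∧
      (∀ z, Φ (TensorProduct.map α γ z) = f z) ∧ ∀ z, Φ (tensorSnd α β γ δ z) = g z := by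
  obtain ⟨φ, hφ, hφα, hφβ⟩ := hE.exists_lift (h.comp_dgpaHom hR.isDGPAHom_tmul_one)
  obtain ⟨ψ, hψ, hψγ, hψδ⟩ := hF.exists_lift (h.comp_dgpaHom hR.isDGPAHom_one_tmul)
  simp only [LinearMap.comp_apply, LinearMap.flip_apply, TensorProduct.mk_apply]
    at hφα hφβ hψγ hψδ
  have hcomm : ∀ {i j x y}, x ∈ E.gr i → y ∈ F.gr j → GradedCommute D i j (φ x) (ψ y) := by
    refine hE.gradedCommute_map_map hF hφ hψ ?_ ?_ ?_ ?_ <;> intro i j a b ha hb <;>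
      simp only [hφα, hφβ, hψγ, hψδ]
    · exact h.mul_fst_fst_swap (hR.tmul_one_mem ha) (hR.one_tmul_mem hb)
    · exact h.gradedCommute_fst_snd (hR.tmul_one_mem ha) (hR.one_tmul_mem hb)
        (hR.br_tmul_one_one_tmul ha hb)
    · exact h.gradedCommute_snd_fst (hR.tmul_one_mem ha) (hR.one_tmul_mem hb)
        (hR.br_tmul_one_one_tmul ha hb)
    · exact h.gradedCommute_snd_snd (hR.tmul_one_mem ha) (hR.one_tmul_mem hb)
        (hR.br_tmul_one_one_tmul ha hb)
  set Φ := TensorProduct.lift (D.mul.compl₁₂ φ ψ)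
  have fst : Φ ∘ₗ TensorProduct.map α γ = f :=
    tensorProduct_ext_of_decomposition P.decomp Q.decomp fun ha hb ↦ by
      simp [Φ, hφα, hψγ, h.fst_tmul hR ha hb]
  have snd : Φ ∘ₗ tensorSnd α β γ δ = g :=
    tensorProduct_ext_of_decomposition P.decomp Q.decomp fun ha hb ↦ by
      simp [Φ, hφα, hφβ, hψγ, hψδ, h.snd_tmul hR ha hb]
  exact ⟨Φ, hG.isDGAHom_lift hφ hψ hcomm, LinearMap.congr_fun fst, LinearMap.congr_fun snd⟩

lemma hom_ext_tensor (hE : IsUEnv P E α β) (hF : IsUEnv Q F γ δ) (hG : IsTensorDGA E F G)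
    {Φ Ψ : M ⊗[k] N →ₗ[k] L} (hΦ : IsDGAHom G D Φ) (hΨ : IsDGAHom G D Ψ)
    (hfst : ∀ z, Φ (TensorProduct.map α γ z) = Ψ (TensorProduct.map α γ z))
    (hsnd : ∀ z, Φ (tensorSnd α β γ δ z) = Ψ (tensorSnd α β γ δ z)) : Φ = Ψ := by
  have left := hE.hom_ext (hΦ.comp hG.isDGAHom_tmul_one) (hΨ.comp hG.isDGAHom_tmul_one)
    (fun a ↦ by simpa [hF.uePair.fst_one] using hfst (a ⊗ₜ Q.one))
    (fun a ↦ by simpa [hF.uePair.fst_one, hF.uePair.snd_one] using hsnd (a ⊗ₜ Q.one))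
  have right := hF.hom_ext (hΦ.comp hG.isDGAHom_one_tmul) (hΨ.comp hG.isDGAHom_one_tmul)
    (fun b ↦ by simpa [hE.uePair.fst_one] using hfst (P.one ⊗ₜ b))
    (fun b ↦ by simpa [hE.uePair.fst_one, hE.uePair.snd_one] using hsnd (P.one ⊗ₜ b))
  exact hG.hom_ext hΦ hΨ (LinearMap.congr_fun left) (LinearMap.congr_fun right)

theorem tensor (hE : IsUEnv P E α β) (hF : IsUEnv Q F γ δ) (hR : IsTensorDGPA P Q R)
    (hG : IsTensorDGA E F G) : IsUEnv R G (TensorProduct.map α γ) (tensorSnd α β γ δ) := by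
  refine ⟨.tensor hR hG hE.uePair hF.uePair, fun L _ _ D f g h ↦ ?_⟩
  obtain ⟨Φ, hΦ, hΦfst, hΦsnd⟩ := hE.exists_lift_tensor hF hR hG h
  exact ⟨Φ, ⟨hΦ, hΦfst, hΦsnd⟩, fun Ψ ⟨hΨ, hΨfst, hΨsnd⟩ ↦ hE.hom_ext_tensor hF hG hΨ hΦ
    (fun z ↦ by rw [hΨfst, hΦfst]) (fun z ↦ by rw [hΨsnd, hΦsnd])⟩

end IsUEnv

end TensorEnveloping

theorem stmt_18_general {k : Type u} [Field k] {A B M N L : Type u}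
    [AddCommGroup A] [Module k A] [AddCommGroup B] [Module k B] [AddCommGroup M] [Module k M]
    [AddCommGroup N] [Module k N] [AddCommGroup L] [Module k L]
    {P : DGPAOn k A} {Q : DGPAOn k B} {R : DGPAOn k (A ⊗[k] B)} (hR : IsTensorDGPA P Q R)
    {S : DGAOn k L} {μ η : A ⊗[k] B →ₗ[k] L} (hS : IsUEnv R S μ η)
    {E : DGAOn k M} {α β : A →ₗ[k] M} (hE : IsUEnv P E α β)
    {F : DGAOn k N} {γ δ : B →ₗ[k] N} (hF : IsUEnv Q F γ δ)
    {G : DGAOn k (M ⊗[k] N)} (hG : IsTensorDGA E F G) :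
    IsUEnv R G (TensorProduct.map α γ) (TensorProduct.map α δ + TensorProduct.map β γ) ∧
    ∃ φ : L →ₗ[k] M ⊗[k] N, IsDGAHom S G φ ∧ Function.Bijective φ ∧
      (∀ x, φ (μ x) = TensorProduct.map α γ x) ∧
      ∀ x, φ (η x) = (TensorProduct.map α δ + TensorProduct.map β γ) x :=
  have hEF := hE.tensor hF hR hG
  ⟨hEF, hS.exists_bijective hEF⟩

/-- `(A⊗B)^e ≅ A^e ⊗ B^e` as differential graded algebras; the maps
`m = m^A ⊗ m^B` and `h = m^A ⊗ h^B + h^A ⊗ m^B` exhibit `A^e ⊗ B^e` as a universal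
enveloping algebra of the tensor product differential graded Poisson algebra `A ⊗ B`. -/
theorem stmt_18 (k : Type u) [Field k] (A B : Type u)
    [AddCommGroup A] [Module k A] [AddCommGroup B] [Module k B]
    (P : DGPAOn k A) (Q : DGPAOn k B)
    (R : DGPAOn k (A ⊗[k] B)) (hR : IsTensorDGPA P Q R)
    (ER : DGAOn k (Env R)) (hER : IsEnvDGA R ER)
    (EP : DGAOn k (Env P)) (hEP : IsEnvDGA P EP)
    (EQ : DGAOn k (Env Q)) (hEQ : IsEnvDGA Q EQ)
    (G : DGAOn k (Env P ⊗[k] Env Q)) (hG : IsTensorDGA EP EQ G) :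
    IsUEnv R G (TensorProduct.map (mgen P) (mgen Q))
      (TensorProduct.map (mgen P) (hgen Q) + TensorProduct.map (hgen P) (mgen Q)) ∧
    ∃ φ : Env R →ₗ[k] Env P ⊗[k] Env Q,
      IsDGAHom ER G φ ∧ Function.Bijective φ ∧
      (∀ x : A ⊗[k] B, φ (mgen R x) = TensorProduct.map (mgen P) (mgen Q) x) ∧
      (∀ x : A ⊗[k] B, φ (hgen R x) =
        (TensorProduct.map (mgen P) (hgen Q) + TensorProduct.map (hgen P) (mgen Q)) x) :=
  stmt_18_general hR hER.isUEnv hEP.isUEnv hEQ.isUEnv hG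

end DGPaper

end
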